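/- arXiv:2506.11296 — 2 statements merged into one kernel-verified Lean document; each statement's English description precedes it below -/
import Mathlib

section
/- Let α ∈ (0,1) and ν > -1. Then ∫_0^∞ W_{-α,1-α}(-r) r^ν dr = Γ(ν+1)/Γ(να+1). -/
open Real MeasureTheory Filter Topology

/-- The Wright function `W_{λ,μ}(z) = ∑ z^n / (n! Γ(λn+μ))`.
(In Mathlib, `Real.Gamma` vanishes at nonpositive integers, so `1/Γ(s) = 0` there.) -/
noncomputable def wrightFn (l μ z : ℝ) : ℝ :=
  ∑' n : ℕ, z ^ n / (n.factorial * Real.Gamma (l * n + μ))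

/-!
For `0 ≤ α < 1`, expanding `e^(z ζ^α)` in Hankel's formula
`1 / Γ(s) = (2πi)⁻¹ ∫ e^ζ ζ^(-s) dζ` gives `W_{-α,μ}(z) = (2πi)⁻¹ ∫ e^ζ ζ^(-μ) e^(z ζ^α) dζ`. The
contour consists of two rays from `1` into the left half-plane; since `α < 1`, their directions can
be chosen so that `Re ζ^α` is bounded below by a positive multiple of `|ζ|^α` on them. Then the
Mellin transform in `r = -z` may be taken under the contour integral: it replaces `e^(-r ζ^α)` by
`Γ(w) ζ^(-α w)`, and Hankel's formula evaluates what is left as `Γ(w) / Γ(μ + α w)`.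

Hankel's formula itself holds for `Re s < -1` because the vertex of the contour can then be moved
to `0`, where the rays become Gamma integrals and Euler's reflection formula applies; both sides
being entire in `s`, it holds everywhere.
-/

open Set Asymptotics ComplexConjugate

section ExpMellin

variable {a z : ℂ}

lemma mellinConvergent_exp_neg_mul (ha : 0 < a.re) (hz : 0 < z.re) :
    MellinConvergent (fun t : ℝ ↦ Complex.exp (-(z * t))) a := by
  have hreal : IntegrableOn (fun t : ℝ ↦ t ^ (a.re - 1) * Real.exp (-(z.re * t))) (Ioi 0) := by
    simpa using integrableOn_rpow_mul_exp_neg_mul_rpow (p := 1) (s := a.re - 1) (b := z.re)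
      (by linarith) one_pos hz
  refine Integrable.mono' hreal (by fun_prop) ?_
  filter_upwards [ae_restrict_mem measurableSet_Ioi] with t ht
  simp [Complex.norm_cpow_eq_rpow_re_of_pos ht, Complex.norm_exp]

lemma norm_cpow_mul_exp_neg_mul_le {t b : ℝ} (ht : 0 < t) (hb : b ≤ z.re) :
    ‖(t : ℂ) ^ a * Complex.exp (-(z * t))‖ ≤ ‖(t : ℂ) ^ a * Complex.exp (-(b * t))‖ := by
  simp only [norm_mul, Complex.norm_exp]
  refine mul_le_mul_of_nonneg_left (Real.exp_le_exp.2 ?_) (norm_nonneg _)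
  simpa using mul_le_mul_of_nonneg_right hb ht.le

lemma differentiableAt_mellin_exp_neg_mul (ha : 0 < a.re) (hz : 0 < z.re) :
    DifferentiableAt ℂ (fun w ↦ mellin (fun t : ℝ ↦ Complex.exp (-(w * t))) a) z := by
  have hU : {w : ℂ | z.re / 2 < w.re} ∈ 𝓝 z :=
    (isOpen_lt continuous_const Complex.continuous_re).mem_nhds (half_lt_self hz)
  have hbound : MellinConvergent (fun t : ℝ ↦ Complex.exp (-((z.re / 2 : ℝ) * t))) (a + 1) :=
    mellinConvergent_exp_neg_mul (by simp; linarith) (by simpa using hz)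
  refine (hasDerivAt_integral_of_dominated_loc_of_deriv_le (μ := volume.restrict (Ioi (0 : ℝ)))
    (F := fun w (t : ℝ) ↦ (t : ℂ) ^ (a - 1) • Complex.exp (-(w * t)))
    (F' := fun w (t : ℝ) ↦ (t : ℂ) ^ (a - 1) • (Complex.exp (-(w * t)) * -t))
    hU (.of_forall fun w ↦ by fun_prop) (mellinConvergent_exp_neg_mul ha hz) (by fun_prop)
    ?_ hbound.norm ?_).2.differentiableAt
  · filter_upwards [ae_restrict_mem measurableSet_Ioi] with t ht w hw
    have ht' : (t : ℂ) ≠ 0 := by exact_mod_cast ht.ne'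
    have : (t : ℂ) ^ (a - 1) • (Complex.exp (-(w * t)) * -t)
        = -((t : ℂ) ^ a * Complex.exp (-(w * t))) := by
      rw [smul_eq_mul, Complex.cpow_sub _ _ ht', Complex.cpow_one]
      field_simp
    rw [this, norm_neg, add_sub_cancel_right]
    exact norm_cpow_mul_exp_neg_mul_le ht hw.le
  · filter_upwards with t w _
    simpa using (((hasDerivAt_id w).mul_const (t : ℂ)).neg.cexp).const_mul ((t : ℂ) ^ (a - 1))

lemma hasMellin_exp_neg_mul (ha : 0 < a.re) (hz : 0 < z.re) :
    HasMellin (fun t : ℝ ↦ Complex.exp (-(z * t))) a (z ^ (-a) * Complex.Gamma a) := by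
  refine ⟨mellinConvergent_exp_neg_mul ha hz, ?_⟩
  have hU : IsOpen {w : ℂ | 0 < w.re} := isOpen_lt continuous_const Complex.continuous_re
  have hf : AnalyticOnNhd ℂ (fun w ↦ mellin (fun t : ℝ ↦ Complex.exp (-(w * t))) a)
      {w : ℂ | 0 < w.re} :=
    DifferentiableOn.analyticOnNhd
      (fun w hw ↦ (differentiableAt_mellin_exp_neg_mul ha hw).differentiableWithinAt) hU
  have hg : AnalyticOnNhd ℂ (fun w : ℂ ↦ w ^ (-a) * Complex.Gamma a) {w : ℂ | 0 < w.re} :=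
    DifferentiableOn.analyticOnNhd (fun w hw ↦
      ((differentiableAt_id.cpow_const (.inl hw)).mul_const _).differentiableWithinAt) hU
  have hreal : Tendsto (fun x : ℝ ↦ (x : ℂ)) (𝓝[≠] 1) (𝓝[≠] 1) :=
    (Complex.continuous_ofReal.tendsto' 1 1 Complex.ofReal_one).inf
      (tendsto_principal_principal.2 fun x hx ↦ by simpa using hx)
  refine hf.eqOn_of_preconnected_of_frequently_eq hg
    (convex_halfSpace_re_gt 0).isPreconnected (z₀ := 1) (by simp)
    (hreal.frequently (Eventually.frequently ?_)) hz
  filter_upwards [nhdsWithin_le_nhds (lt_mem_nhds one_pos)] with x hx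
  have harg : (x : ℂ).arg ≠ π := by simpa [Complex.arg_ofReal_of_nonneg hx.le] using pi_pos.ne
  simp only [mellin, smul_eq_mul]
  rw [Complex.integral_cpow_mul_exp_neg_mul_Ioi ha hx, one_div, Complex.inv_cpow _ _ harg,
    Complex.cpow_neg]

end ExpMellin

section RayGrowth

variable {c : ℂ}

lemma ofReal_add_mul_mem_slitPlane (hc : c.im ≠ 0) {x t : ℝ} (h : 0 < x ∨ t ≠ 0) :
    (x + t * c : ℂ) ∈ Complex.slitPlane := by
  rw [Complex.mem_slitPlane_iff]
  rcases eq_or_ne t 0 with rfl | ht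
  · exact .inl (by simpa using h)
  · exact .inr (by simp [ht, hc])

lemma one_add_mul_mem_slitPlane (hc : c.im ≠ 0) (t : ℝ) : (1 + t * c : ℂ) ∈ Complex.slitPlane := by
  simpa using ofReal_add_mul_mem_slitPlane hc (x := 1) (t := t) (.inl one_pos)

lemma tendsto_norm_add_mul_atTop (a : ℂ) (hc : c ≠ 0) :
    Tendsto (fun t : ℝ ↦ ‖a + t * c‖) atTop atTop := by
  have h : Tendsto (fun t : ℝ ↦ t * ‖c‖ - ‖a‖) atTop atTop :=
    tendsto_atTop_add_const_right _ _ (tendsto_id.atTop_mul_const (norm_pos_iff.2 hc))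
  refine tendsto_atTop_mono' _ ?_ h
  filter_upwards [eventually_ge_atTop 0] with t ht
  have := norm_sub_norm_le (t * c) (-a)
  simpa [abs_of_nonneg ht, add_comm] using this

lemma norm_add_mul_isBigO (a c : ℂ) : (fun t : ℝ ↦ ‖a + t * c‖) =O[atTop] (id : ℝ → ℝ) := by
  refine IsBigO.norm_left (.add (isLittleO_const_id_atTop a).isBigO ?_)
  refine .of_bound ‖c‖ (.of_forall fun t ↦ ?_)
  simp [mul_comm]

lemma norm_log_le (z : ℂ) : ‖Complex.log z‖ ≤ |Real.log ‖z‖| + π := by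
  refine (Complex.norm_le_abs_re_add_abs_im _).trans ?_
  simpa [Complex.log_re, Complex.log_im] using Complex.abs_arg_le_pi z

lemma norm_log_add_mul_isLittleO (a : ℂ) (hc : c ≠ 0) :
    (fun t : ℝ ↦ ‖Complex.log (a + t * c)‖) =o[atTop] (id : ℝ → ℝ) := by
  have hlog : (fun t : ℝ ↦ Real.log ‖a + t * c‖) =o[atTop] (id : ℝ → ℝ) :=
    (isLittleO_log_id_atTop.comp_tendsto (tendsto_norm_add_mul_atTop a hc)).trans_isBigO
      (norm_add_mul_isBigO a c)
  refine IsBigO.trans_isLittleO (.of_norm_le fun t ↦ ?_)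
    (hlog.norm_left.add (isLittleO_const_id_atTop π))
  simpa using norm_log_le _

lemma rpow_isLittleO_id_atTop {α : ℝ} (hα : α < 1) :
    (fun x : ℝ ↦ x ^ α) =o[atTop] (id : ℝ → ℝ) := by
  refine (isLittleO_iff_tendsto' (eventually_ne_atTop 0 |>.mono fun x hx h ↦ (hx h).elim)).2 ?_
  refine (tendsto_rpow_neg_atTop (sub_pos.2 hα)).congr' ?_
  filter_upwards [eventually_gt_atTop 0] with x hx
  rw [neg_sub, Real.rpow_sub_one hx.ne']

lemma norm_add_mul_rpow_isLittleO (a : ℂ) (hc : c ≠ 0) {α : ℝ} (hα : α < 1) :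
    (fun t : ℝ ↦ ‖a + t * c‖ ^ α) =o[atTop] (id : ℝ → ℝ) :=
  ((rpow_isLittleO_id_atTop hα).comp_tendsto (tendsto_norm_add_mul_atTop a hc)).trans_isBigO
    (norm_add_mul_isBigO a c)

lemma integrableOn_exp_neg_mul_add {b : ℝ} {g : ℝ → ℝ} (hb : 0 < b)
    (hg : ContinuousOn g (Ici 0)) (hgo : g =o[atTop] (id : ℝ → ℝ)) :
    IntegrableOn (fun t ↦ Real.exp (-b * t + g t)) (Ioi 0) := by
  refine integrable_of_isBigO_exp_neg (half_pos hb) (by fun_prop) ?_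
  refine .of_bound 1 ?_
  filter_upwards [hgo.bound (half_pos hb), eventually_ge_atTop 0] with t hgt ht
  simp only [Real.norm_eq_abs, Real.abs_exp, one_mul, Real.exp_le_exp]
  have := le_abs_self (g t)
  rw [id, Real.norm_eq_abs, Real.norm_of_nonneg ht] at hgt
  linarith

lemma integrableOn_exp_ray (hre : c.re < 0) (him : c.im ≠ 0) (M R : ℝ) {α : ℝ} (hα : α < 1) :
    IntegrableOn (fun t : ℝ ↦ Real.exp ((1 + t * c : ℂ).re + M * ‖Complex.log (1 + t * c)‖
      + R * ‖(1 + t * c : ℂ)‖ ^ α)) (Ioi 0) := by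
  have hc : c ≠ 0 := fun h ↦ by simp [h] at him
  have hcont : ContinuousOn (fun t : ℝ ↦ 1 + M * ‖Complex.log (1 + t * c)‖
      + R * ‖(1 + t * c : ℂ)‖ ^ α) (Ici 0) := by
    refine .add (.add continuousOn_const (.mul continuousOn_const (.norm (.clog (by fun_prop) ?_))))
      (.mul continuousOn_const (.rpow_const (by fun_prop) fun t _ ↦ .inl ?_))
    · exact fun t _ ↦ one_add_mul_mem_slitPlane him t
    · exact norm_ne_zero_iff.2 (Complex.slitPlane_ne_zero (one_add_mul_mem_slitPlane him t))
  refine (integrableOn_exp_neg_mul_add (neg_pos.2 hre) hcont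
    (.add (.add (isLittleO_const_id_atTop 1) ((norm_log_add_mul_isLittleO 1 hc).const_mul_left M))
      ((norm_add_mul_rpow_isLittleO 1 hc hα).const_mul_left R))).congr_fun
    (fun t _ ↦ ?_) measurableSet_Ioi
  simp only [Complex.add_re, Complex.one_re, Complex.re_ofReal_mul]
  ring_nf

end RayGrowth

/-- The integral of `f` along the ray `{a + t * c | 0 ≤ t}`, oriented away from its vertex `a`. -/
noncomputable def rayIntegral (f : ℂ → ℂ) (a c : ℂ) : ℂ :=
  c * ∫ t in Ioi (0 : ℝ), f (a + t * c)

/-- The integral `(2πi)⁻¹ ∫ f` over the Hankel contour which comes from infinity along the ray from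
`1` in direction `conj c` and returns to infinity along the ray from `1` in direction `c`. For
`c.re < 0 < c.im` it encircles the negative real axis counterclockwise. -/
noncomputable def hankelIntegral (f : ℂ → ℂ) (c : ℂ) : ℂ :=
  (2 * π * Complex.I)⁻¹ * (rayIntegral f 1 c - rayIntegral f 1 (conj c))

/-- The integrand `e^ζ ζ^(-s)` of Hankel's formula for `1 / Γ(s)`. -/
noncomputable def hankelKernel (s ζ : ℂ) : ℂ :=
  Complex.exp ζ * ζ ^ (-s)

/-- The integrand `e^ζ ζ^(-μ) e^(z ζ^α)` of the contour integral for `W_{-α,μ}(z)`. -/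
noncomputable def wrightKernel (α : ℝ) (μ z ζ : ℂ) : ℂ :=
  hankelKernel μ ζ * Complex.exp (z * ζ ^ (α : ℂ))

section HankelKernel

variable {c ζ : ℂ} {α : ℝ}

@[fun_prop]
lemma measurable_hankelKernel (s : ℂ) : Measurable (hankelKernel s) := by
  unfold hankelKernel
  fun_prop

lemma norm_cpow_le_exp (hζ : ζ ≠ 0) (s : ℂ) :
    ‖ζ ^ s‖ ≤ Real.exp (‖s‖ * ‖Complex.log ζ‖) := by
  rw [Complex.cpow_def_of_ne_zero hζ, Complex.norm_exp, mul_comm ‖s‖, ← norm_mul]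
  exact Real.exp_le_exp.2 (Complex.re_le_norm _)

lemma norm_hankelKernel_le (hζ : ζ ≠ 0) (s : ℂ) :
    ‖hankelKernel s ζ‖ ≤ Real.exp (ζ.re + ‖s‖ * ‖Complex.log ζ‖) := by
  rw [hankelKernel, norm_mul, Complex.norm_exp, Real.exp_add, ← norm_neg s]
  gcongr
  exact norm_cpow_le_exp hζ (-s)

lemma integrableOn_hankelKernel (hre : c.re < 0) (him : c.im ≠ 0) (s : ℂ) :
    IntegrableOn (fun t : ℝ ↦ hankelKernel s (1 + t * c)) (Ioi 0) := by
  refine (integrableOn_exp_ray hre him ‖s‖ 0 one_half_lt_one).mono'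
    (Measurable.aestronglyMeasurable (by fun_prop)) (.of_forall fun t ↦ ?_)
  simpa using norm_hankelKernel_le
    (Complex.slitPlane_ne_zero (one_add_mul_mem_slitPlane him t)) s

lemma hasDerivAt_hankelKernel_left (hζ : ζ ≠ 0) (s : ℂ) :
    HasDerivAt (fun s ↦ hankelKernel s ζ) (-(hankelKernel s ζ * Complex.log ζ)) s := by
  refine (((hasDerivAt_neg s).const_cpow (.inl hζ)).const_mul (Complex.exp ζ)).congr_deriv ?_
  rw [hankelKernel]
  ring

lemma differentiable_rayIntegral_hankelKernel (hre : c.re < 0) (him : c.im ≠ 0) :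
    Differentiable ℂ (fun s ↦ rayIntegral (hankelKernel s) 1 c) := by
  intro s
  have hζ (t : ℝ) : (1 + t * c : ℂ) ≠ 0 :=
    Complex.slitPlane_ne_zero (one_add_mul_mem_slitPlane him t)
  refine DifferentiableAt.const_mul (hasDerivAt_integral_of_dominated_loc_of_deriv_le
    (μ := volume.restrict (Ioi (0 : ℝ))) (F := fun s (t : ℝ) ↦ hankelKernel s (1 + t * c))
    (F' := fun s (t : ℝ) ↦ -(hankelKernel s (1 + t * c) * Complex.log (1 + t * c)))
    (Metric.ball_mem_nhds s one_pos)
    (.of_forall fun w ↦ Measurable.aestronglyMeasurable (by fun_prop))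
    (integrableOn_hankelKernel hre him s) (Measurable.aestronglyMeasurable (by fun_prop))
    (.of_forall fun t w hw ↦ ?_)
    (integrableOn_exp_ray hre him (‖s‖ + 2) 0 one_half_lt_one)
    (.of_forall fun t w _ ↦ hasDerivAt_hankelKernel_left (hζ t) w)).2.differentiableAt _
  have hw : ‖w‖ ≤ ‖s‖ + 1 := by
    linarith [norm_le_norm_add_norm_sub' w s, (mem_ball_iff_norm.1 hw)]
  set L := ‖Complex.log (1 + t * c)‖
  calc ‖-(hankelKernel w (1 + t * c) * Complex.log (1 + t * c))‖
      ≤ Real.exp ((1 + t * c : ℂ).re + (‖s‖ + 1) * L) * Real.exp L := by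
        rw [norm_neg, norm_mul]
        gcongr
        · exact (norm_hankelKernel_le (hζ t) w).trans (by gcongr)
        · exact (lt_add_one L).le.trans (Real.add_one_le_exp L)
    _ = _ := by
        rw [← Real.exp_add]
        ring_nf

lemma hankelKernel_add (hζ : ζ ≠ 0) (s w : ℂ) :
    hankelKernel (s + w) ζ = hankelKernel s ζ * ζ ^ (-w) := by
  rw [hankelKernel, hankelKernel, neg_add, Complex.cpow_add _ _ hζ, mul_assoc]

lemma hankelKernel_sub_mul_natCast (hζ : ζ ≠ 0) (μ : ℂ) (n : ℕ) :
    hankelKernel (μ - α * n) ζ = hankelKernel μ ζ * (ζ ^ (α : ℂ)) ^ n := by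
  rw [sub_eq_add_neg, hankelKernel_add hζ, neg_neg, Complex.cpow_mul_nat]

lemma hasSum_wrightKernel (hζ : ζ ≠ 0) (μ z : ℂ) :
    HasSum (fun n : ℕ ↦ z ^ n / n.factorial * hankelKernel (μ - α * n) ζ)
      (wrightKernel α μ z ζ) := by
  have h := (NormedSpace.expSeries_div_hasSum_exp (z * ζ ^ (α : ℂ))).mul_left (hankelKernel μ ζ)
  rw [← Complex.exp_eq_exp_ℂ] at h
  refine h.congr_fun fun n ↦ ?_
  rw [hankelKernel_sub_mul_natCast hζ, mul_pow]
  ring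

lemma hasSum_rayIntegral_wrightKernel (hre : c.re < 0) (him : c.im ≠ 0) (hα : α < 1) (μ z : ℂ) :
    HasSum (fun n : ℕ ↦ z ^ n / n.factorial * rayIntegral (hankelKernel (μ - α * n)) 1 c)
      (rayIntegral (wrightKernel α μ z) 1 c) := by
  have hζ (t : ℝ) : (1 + t * c : ℂ) ≠ 0 :=
    Complex.slitPlane_ne_zero (one_add_mul_mem_slitPlane him t)
  have hexp (t : ℝ) : HasSum (fun n : ℕ ↦ ‖hankelKernel μ (1 + t * c)‖ *
      ((‖z‖ * ‖(1 + t * c : ℂ)‖ ^ α) ^ n / n.factorial))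
      (‖hankelKernel μ (1 + t * c)‖ * Real.exp (‖z‖ * ‖(1 + t * c : ℂ)‖ ^ α)) := by
    rw [Real.exp_eq_exp_ℝ]
    exact (NormedSpace.expSeries_div_hasSum_exp (‖z‖ * ‖(1 + t * c : ℂ)‖ ^ α)).mul_left _
  have hnorm (n : ℕ) (t : ℝ) : ‖z ^ n / n.factorial * hankelKernel (μ - α * n) (1 + t * c)‖ ≤
      ‖hankelKernel μ (1 + t * c)‖ * ((‖z‖ * ‖(1 + t * c : ℂ)‖ ^ α) ^ n / n.factorial) := by
    refine le_of_eq ?_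
    rw [hankelKernel_sub_mul_natCast (hζ t), mul_pow, ← Complex.norm_cpow_real]
    simp only [norm_mul, norm_div, norm_pow, Complex.norm_natCast]
    ring
  have hint : IntegrableOn (fun t : ℝ ↦ ∑' n : ℕ, ‖hankelKernel μ (1 + t * c)‖ *
      ((‖z‖ * ‖(1 + t * c : ℂ)‖ ^ α) ^ n / n.factorial)) (Ioi 0) := by
    simp only [(hexp _).tsum_eq]
    refine (integrableOn_exp_ray hre him ‖μ‖ ‖z‖ hα).mono'
      (Measurable.aestronglyMeasurable (by fun_prop)) (.of_forall fun t ↦ ?_)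
    rw [Real.norm_of_nonneg (by positivity), Real.exp_add]
    gcongr
    exact norm_hankelKernel_le (hζ t) μ
  have h := MeasureTheory.hasSum_integral_of_dominated_convergence
    (μ := volume.restrict (Ioi (0 : ℝ)))
    (F := fun (n : ℕ) t ↦ z ^ n / n.factorial * hankelKernel (μ - α * n) (1 + t * c))
    (f := fun t ↦ wrightKernel α μ z (1 + t * c)) _
    (fun n ↦ Measurable.aestronglyMeasurable (by fun_prop)) (fun n ↦ .of_forall (hnorm n))
    (.of_forall fun t ↦ (hexp t).summable) hint
    (.of_forall fun t ↦ hasSum_wrightKernel (hζ t) μ z)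
  simp only [integral_const_mul] at h
  simpa only [rayIntegral, mul_left_comm c] using h.mul_left c

end HankelKernel

section RayShift

variable {c : ℂ}

lemma integral_deriv_ray_eq_neg {f : ℂ → ℂ} {u : ℝ}
    (hcont : ContinuousAt f u)
    (hdiff : ∀ t : ℝ, 0 < t → DifferentiableAt ℂ f (u + t * c))
    (hint : IntegrableOn (fun t : ℝ ↦ f (u + t * c)) (Ioi 0))
    (hint' : IntegrableOn (fun t : ℝ ↦ deriv f (u + t * c)) (Ioi 0)) :
    c * ∫ t in Ioi (0 : ℝ), deriv f (u + t * c) = -f u := by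
  have hderiv (t : ℝ) (ht : t ∈ Ioi 0) :
      HasDerivAt (fun t : ℝ ↦ f (u + t * c)) (c * deriv f (u + t * c)) t := by
    have hline : HasDerivAt (fun t : ℝ ↦ (u + t * c : ℂ)) c t := by
      simpa using ((hasDerivAt_id t).ofReal_comp.mul_const c).const_add (u : ℂ)
    simpa [mul_comm c] using! (hdiff t ht).hasDerivAt.scomp t hline
  have hlim := tendsto_zero_of_hasDerivAt_of_integrableOn_Ioi hderiv (hint'.const_mul c) hint
  have hcont' : ContinuousAt (fun t : ℝ ↦ f (u + t * c)) 0 :=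
    ContinuousAt.comp (by simpa using hcont) (by fun_prop)
  rw [← integral_const_mul,
    integral_Ioi_of_hasDerivAt_of_tendsto hcont'.continuousWithinAt hderiv (hint'.const_mul c) hlim]
  simp

lemma intervalIntegral_deriv_eq_sub {f : ℂ → ℂ} {x y : ℝ} {w : ℂ}
    (hdiff : ∀ u ∈ uIcc x y, DifferentiableAt ℂ f (u + w))
    (hint : IntervalIntegrable (fun u : ℝ ↦ deriv f (u + w)) volume x y) :
    ∫ u in x..y, deriv f (u + w) = f (y + w) - f (x + w) := by
  refine intervalIntegral.integral_eq_sub_of_hasDerivAt (f := fun u : ℝ ↦ f (u + w))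
    (fun u hu ↦ ?_) hint
  have hline : HasDerivAt (fun u : ℝ ↦ (u + w : ℂ)) 1 u := by
    simpa using (hasDerivAt_id u).ofReal_comp.add_const w
  simpa using! (hdiff u hu).hasDerivAt.scomp u hline

lemma integrable_uncurry_deriv_ray {f : ℂ → ℂ} {B : ℝ → ℝ} {x y : ℝ}
    (hB : IntegrableOn B (Ioi 0))
    (hbound : ∀ u ∈ uIcc x y, ∀ t : ℝ, 0 < t → ‖deriv f (u + t * c)‖ ≤ B t) :
    Integrable (Function.uncurry fun u t : ℝ ↦ deriv f (u + t * c))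
      ((volume.restrict (uIoc x y)).prod (volume.restrict (Ioi 0))) := by
  refine ((intervalIntegrable_const (c := (1 : ℝ))).def'.mul_prod hB).mono'
    ((measurable_deriv f).comp (by fun_prop)).aestronglyMeasurable ?_
  rw [Measure.prod_restrict]
  filter_upwards [ae_restrict_mem (measurableSet_uIoc.prod measurableSet_Ioi)] with p hp
  simpa using! hbound p.1 (uIoc_subset_uIcc hp.1) p.2 hp.2

-- With `I u` the ray integral from vertex `u`, Fubini turns
-- `I x - I y = -∬ c * deriv f (u + t * c)` into an integral over `u`, whose integrand is `f u`
-- since `f` vanishes at the end of the ray.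
lemma rayIntegral_sub_rayIntegral {f : ℂ → ℂ} {B : ℝ → ℝ} {x y : ℝ}
    (hcont : ∀ u ∈ uIcc x y, ContinuousAt f u)
    (hdiff : ∀ u ∈ uIcc x y, ∀ t : ℝ, 0 < t → DifferentiableAt ℂ f (u + t * c))
    (hint : ∀ u ∈ uIcc x y, IntegrableOn (fun t : ℝ ↦ f (u + t * c)) (Ioi 0))
    (hB : IntegrableOn B (Ioi 0))
    (hbound : ∀ u ∈ uIcc x y, ∀ t : ℝ, 0 < t → ‖deriv f (u + t * c)‖ ≤ B t) :
    rayIntegral f x c - rayIntegral f y c = ∫ u in x..y, f u := by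
  have hmeas : Measurable fun p : ℝ × ℝ ↦ deriv f (p.1 + p.2 * c) :=
    (measurable_deriv f).comp (by fun_prop)
  have hswap := intervalIntegral_integral_swap (integrable_uncurry_deriv_ray hB hbound)
  have hinner (u : ℝ) (hu : u ∈ uIcc x y) :
      c * ∫ t in Ioi (0 : ℝ), deriv f (u + t * c) = -f u := by
    refine integral_deriv_ray_eq_neg (hcont u hu) (hdiff u hu) (hint u hu) ?_
    refine hB.mono' (hmeas.comp measurable_prodMk_left).aestronglyMeasurable ?_
    filter_upwards [ae_restrict_mem measurableSet_Ioi] with t ht using hbound u hu t ht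
  have houter (t : ℝ) (ht : t ∈ Ioi (0 : ℝ)) :
      ∫ u in x..y, deriv f (u + t * c) = f (y + t * c) - f (x + t * c) := by
    refine intervalIntegral_deriv_eq_sub (fun u hu ↦ hdiff u hu t ht) ?_
    rw [intervalIntegrable_iff]
    refine (intervalIntegrable_const (c := B t)).def'.mono'
      (hmeas.comp measurable_prodMk_right).aestronglyMeasurable ?_
    filter_upwards [ae_restrict_mem measurableSet_uIoc] with u hu
      using hbound u (uIoc_subset_uIcc hu) t ht
  calc rayIntegral f x c - rayIntegral f y c
      = -(c * ∫ t in Ioi (0 : ℝ), ∫ u in x..y, deriv f (u + t * c)) := by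
        rw [setIntegral_congr_fun measurableSet_Ioi houter,
          integral_sub (hint y right_mem_uIcc) (hint x left_mem_uIcc), rayIntegral, rayIntegral]
        ring
    _ = -∫ u in x..y, c * ∫ t in Ioi (0 : ℝ), deriv f (u + t * c) := by
        rw [intervalIntegral.integral_const_mul, hswap]
    _ = ∫ u in x..y, f u := by
        rw [intervalIntegral.integral_congr hinner, intervalIntegral.integral_neg, neg_neg]

end RayShift

section HankelFormula

variable {c s : ℂ}

lemma hasDerivAt_hankelKernel {ζ : ℂ} (hζ : ζ ∈ Complex.slitPlane) (s : ℂ) :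
    HasDerivAt (hankelKernel s) (hankelKernel s ζ - s * hankelKernel (s + 1) ζ) ζ := by
  refine ((Complex.hasDerivAt_exp ζ).mul ((hasDerivAt_id ζ).cpow_const hζ)).congr_deriv ?_
  simp only [hankelKernel, id, neg_add, sub_eq_add_neg]
  ring

lemma continuousAt_hankelKernel {ζ : ℂ} (hs : s.re < 0) (hζ : 0 ≤ ζ.re ∨ ζ.im ≠ 0) :
    ContinuousAt (hankelKernel s) ζ :=
  Complex.continuous_exp.continuousAt.mul
    (Complex.continuousAt_cpow_const_of_re_pos hζ (by simpa using hs))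

lemma isLittleO_log_one_add_mul {k : ℝ} (hk : 0 < k) :
    (fun t : ℝ ↦ Real.log (1 + k * t)) =o[atTop] (id : ℝ → ℝ) := by
  have htop : Tendsto (fun t : ℝ ↦ 1 + k * t) atTop atTop :=
    tendsto_atTop_add_const_left _ _ (tendsto_id.const_mul_atTop hk)
  exact (isLittleO_log_id_atTop.comp_tendsto htop).trans_isBigO
    ((isLittleO_const_id_atTop 1).isBigO.add (isBigO_const_mul_self k id atTop))

lemma integrableOn_exp_neg_mul_mul_one_add_rpow {b k : ℝ} (hb : 0 < b) (hk : 0 < k) (p : ℝ) :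
    IntegrableOn (fun t : ℝ ↦ Real.exp (-b * t) * (1 + k * t) ^ p) (Ioi 0) := by
  have hpos {t : ℝ} (ht : 0 ≤ t) : 0 < 1 + k * t := by positivity
  refine (integrableOn_exp_neg_mul_add hb (g := fun t ↦ Real.log (1 + k * t) * p) ?_ ?_).congr_fun
    (fun t ht ↦ ?_) measurableSet_Ioi
  · exact .mul (.log (by fun_prop) fun t ht ↦ (hpos ht).ne') continuousOn_const
  · simpa only [mul_comm _ p] using (isLittleO_log_one_add_mul hk).const_mul_left p
  · simp only
    rw [Real.exp_add, Real.rpow_def_of_pos (hpos (le_of_lt ht))]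

lemma norm_hankelKernel_ofReal_add_mul_le (hs : s.re ≤ 0) (hc : c ≠ 0) {u t : ℝ}
    (hu : u ∈ Icc (0 : ℝ) 1) (ht : 0 < t) :
    ‖hankelKernel s (u + t * c)‖ ≤
      Real.exp (1 + π * |s.im|) * (Real.exp (c.re * t) * (1 + ‖c‖ * t) ^ (-s.re)) := by
  have hnorm : ‖(u + t * c : ℂ)‖ ≤ 1 + ‖c‖ * t := by
    refine (norm_add_le _ _).trans ?_
    simpa [abs_of_nonneg hu.1, abs_of_pos ht, mul_comm] using hu.2
  have hre : (u + t * c : ℂ).re ≤ 1 + c.re * t := by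
    simpa [mul_comm] using hu.2
  have harg : Real.exp (-(Complex.arg (u + t * c) * (-s).im)) ≤ Real.exp (π * |s.im|) := by
    refine Real.exp_le_exp.2 ((neg_le_abs _).trans ?_)
    rw [abs_mul, Complex.neg_im, abs_neg]
    gcongr
    exact Complex.abs_arg_le_pi _
  calc ‖hankelKernel s (u + t * c)‖
      ≤ Real.exp (u + t * c : ℂ).re * (‖(u + t * c : ℂ)‖ ^ (-s.re)
          * Real.exp (-(Complex.arg (u + t * c) * (-s).im))) := by
        rw [hankelKernel, norm_mul, Complex.norm_exp, Real.exp_neg, ← div_eq_mul_inv]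
        gcongr
        exact Complex.norm_cpow_le _ _
    _ ≤ Real.exp (1 + c.re * t) * ((1 + ‖c‖ * t) ^ (-s.re) * Real.exp (π * |s.im|)) := by
        gcongr
        linarith
    _ = _ := by
        simp only [Real.exp_add]
        ring

lemma rayIntegral_hankelKernel_zero_sub_one (hre : c.re < 0) (him : c.im ≠ 0) (hs : s.re < -1) :
    rayIntegral (hankelKernel s) 0 c - rayIntegral (hankelKernel s) 1 c =
      ∫ u in (0 : ℝ)..1, hankelKernel s u := by
  have hc : c ≠ 0 := fun h ↦ by simp [h] at him
  have hslit (u : ℝ) {t : ℝ} (ht : 0 < t) : (u + t * c : ℂ) ∈ Complex.slitPlane :=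
    ofReal_add_mul_mem_slitPlane him (.inr ht.ne')
  have hdom (w : ℂ) : IntegrableOn (fun t : ℝ ↦ Real.exp (1 + π * |w.im|) *
      (Real.exp (c.re * t) * (1 + ‖c‖ * t) ^ (-w.re))) (Ioi 0) := by
    simpa using! (integrableOn_exp_neg_mul_mul_one_add_rpow (neg_pos.2 hre)
      (norm_pos_iff.2 hc) (-w.re)).const_mul (Real.exp (1 + π * |w.im|))
  have hs' : (s + 1).re ≤ 0 := by simp; linarith
  have h := rayIntegral_sub_rayIntegral (f := hankelKernel s) (c := c) (x := 0) (y := 1)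
    (fun u hu ↦ ?_) (fun u _ t ht ↦ (hasDerivAt_hankelKernel (hslit u ht) s).differentiableAt)
    (fun u hu ↦ (hdom s).mono' (Measurable.aestronglyMeasurable (by fun_prop)) ?_)
    ((hdom s).add ((hdom (s + 1)).const_mul ‖s‖)) (fun u hu t ht ↦ ?_)
  · simpa using h
  all_goals rw [uIcc_of_le zero_le_one] at hu
  · exact continuousAt_hankelKernel (by linarith) (.inl (by simpa using hu.1))
  · filter_upwards [ae_restrict_mem measurableSet_Ioi] with t ht
      using norm_hankelKernel_ofReal_add_mul_le (by linarith) hc hu ht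
  · rw [(hasDerivAt_hankelKernel (hslit u ht) s).deriv]
    refine (norm_sub_le _ _).trans (add_le_add ?_ ?_)
    · exact norm_hankelKernel_ofReal_add_mul_le (by linarith) hc hu ht
    · rw [norm_mul]
      exact mul_le_mul_of_nonneg_left (norm_hankelKernel_ofReal_add_mul_le hs' hc hu ht)
        (norm_nonneg s)

lemma rayIntegral_hankelKernel_zero (hre : c.re < 0) (hs : s.re < 1) :
    rayIntegral (hankelKernel s) 0 c =
      c ^ (1 - s) * (-c) ^ (-(1 - s)) * Complex.Gamma (1 - s) := by
  have hc : c ≠ 0 := fun h ↦ by simp [h] at hre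
  have hmellin : ∫ t in Ioi (0 : ℝ), hankelKernel s (0 + t * c) =
      c ^ (-s) * mellin (fun t : ℝ ↦ Complex.exp (-(-c * t))) (1 - s) := by
    rw [mellin, ← integral_const_mul]
    refine setIntegral_congr_fun measurableSet_Ioi fun t (ht : 0 < t) ↦ ?_
    have ht' : (t : ℂ) ≠ 0 := by exact_mod_cast ht.ne'
    simp only [hankelKernel, zero_add, smul_eq_mul, neg_mul, neg_neg, mul_comm c]
    rw [Complex.cpow_def_of_ne_zero (mul_ne_zero ht' hc), Complex.log_ofReal_mul ht hc,
      Complex.ofReal_log ht.le, add_mul, Complex.exp_add, ← Complex.cpow_def_of_ne_zero ht',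
      ← Complex.cpow_def_of_ne_zero hc, sub_sub_cancel_left]
    ring
  rw [rayIntegral, hmellin, (hasMellin_exp_neg_mul (by simpa) (by simpa)).2, sub_eq_add_neg 1 s,
    Complex.cpow_add _ _ hc, Complex.cpow_one]
  ring

lemma cpow_mul_neg_cpow_neg_of_im_pos (hc : 0 < c.im) (w : ℂ) :
    c ^ w * (-c) ^ (-w) = Complex.exp (w * π * Complex.I) := by
  have hc0 : c ≠ 0 := fun h ↦ by simp [h] at hc
  rw [Complex.cpow_def_of_ne_zero hc0, Complex.cpow_def_of_ne_zero (neg_ne_zero.2 hc0),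
    ← Complex.exp_add, Complex.log, Complex.log, norm_neg,
    Complex.arg_neg_eq_arg_sub_pi_of_im_pos hc]
  push_cast
  ring_nf

lemma cpow_mul_neg_cpow_neg_of_im_neg (hc : c.im < 0) (w : ℂ) :
    c ^ w * (-c) ^ (-w) = Complex.exp (-(w * π * Complex.I)) := by
  have hc0 : c ≠ 0 := fun h ↦ by simp [h] at hc
  rw [Complex.cpow_def_of_ne_zero hc0, Complex.cpow_def_of_ne_zero (neg_ne_zero.2 hc0),
    ← Complex.exp_add, Complex.log, Complex.log, norm_neg,
    Complex.arg_neg_eq_arg_add_pi_of_im_neg hc]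
  push_cast
  ring_nf

lemma sin_mul_Gamma_one_sub (hs : s.re < 1) :
    Complex.sin (π * s) * Complex.Gamma (1 - s) = π * (Complex.Gamma s)⁻¹ := by
  have hΓ : Complex.Gamma (1 - s) ≠ 0 := Complex.Gamma_ne_zero_of_re_pos (by simpa)
  have hreflection := Complex.Gamma_mul_Gamma_one_sub s
  rcases eq_or_ne (Complex.sin (π * s)) 0 with hsin | hsin
  · simp_all
  · rw [eq_div_iff hsin] at hreflection
    have hΓs : Complex.Gamma s ≠ 0 := fun h ↦ by simp [h, pi_ne_zero, eq_comm] at hreflection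
    rw [eq_mul_inv_iff_mul_eq₀ hΓs]
    linear_combination hreflection

lemma hankelIntegral_hankelKernel_of_re_lt (hre : c.re < 0) (him : 0 < c.im) (hs : s.re < -1) :
    hankelIntegral (hankelKernel s) c = (Complex.Gamma s)⁻¹ := by
  have hre' : (conj c).re < 0 := by simpa
  have him' : (conj c).im < 0 := by simpa
  have hs1 : s.re < 1 := by linarith
  have hsin : Complex.exp ((1 - s) * π * Complex.I) - Complex.exp (-((1 - s) * π * Complex.I)) =
      2 * Complex.I * Complex.sin (π * s) := by
    have hangle : (1 - s) * π = π - π * s := by ring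
    rw [hangle, ← Complex.sin_pi_sub, mul_right_comm, Complex.two_sin, mul_assoc _ Complex.I,
      Complex.I_mul_I, neg_mul]
    ring
  calc hankelIntegral (hankelKernel s) c
      = (2 * π * Complex.I)⁻¹ *
          (rayIntegral (hankelKernel s) 0 c - rayIntegral (hankelKernel s) 0 (conj c)) := by
        rw [hankelIntegral]
        linear_combination (2 * π * Complex.I)⁻¹ *
          (rayIntegral_hankelKernel_zero_sub_one hre' him'.ne hs -
            rayIntegral_hankelKernel_zero_sub_one hre him.ne' hs)
    _ = (2 * π * Complex.I)⁻¹ *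
          (2 * Complex.I * (Complex.sin (π * s) * Complex.Gamma (1 - s))) := by
        rw [rayIntegral_hankelKernel_zero hre hs1, rayIntegral_hankelKernel_zero hre' hs1,
          cpow_mul_neg_cpow_neg_of_im_pos him, cpow_mul_neg_cpow_neg_of_im_neg him', ← sub_mul,
          hsin, mul_assoc (2 * Complex.I)]
    _ = (Complex.Gamma s)⁻¹ := by
        rw [sin_mul_Gamma_one_sub hs1]
        field_simp

theorem hankelIntegral_hankelKernel (hre : c.re < 0) (him : 0 < c.im) (s : ℂ) :
    hankelIntegral (hankelKernel s) c = (Complex.Gamma s)⁻¹ := by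
  have hdiff : Differentiable ℂ fun s ↦ hankelIntegral (hankelKernel s) c :=
    ((differentiable_rayIntegral_hankelKernel hre him.ne').sub
      (differentiable_rayIntegral_hankelKernel (c := conj c) (by simpa) (by simpa using him.ne'))
      ).const_mul _
  have hleft : ∀ᶠ s : ℂ in 𝓝 (-2), s.re < -1 :=
    Complex.continuous_re.continuousAt.eventually_lt_const (by norm_num)
  refine congrFun (AnalyticOnNhd.eq_of_eventuallyEq (z₀ := -2)
    (Complex.analyticOnNhd_univ_iff_differentiable.2 hdiff)
    (Complex.analyticOnNhd_univ_iff_differentiable.2 Complex.differentiable_one_div_Gamma) ?_) s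
  filter_upwards [hleft] with w hw using hankelIntegral_hankelKernel_of_re_lt hre him hw

end HankelFormula

section WrightMellin

variable {c ζ w : ℂ} {α : ℝ}

lemma abs_arg_one_add_mul_le (hre : c.re < 0) (him : c.im ≠ 0) {t : ℝ} (ht : 0 ≤ t) :
    |(1 + t * c).arg| ≤ |c.arg| := by
  have hc : c ≠ 0 := fun h ↦ by simp [h] at him
  have hζ : (1 + t * c : ℂ) ≠ 0 := Complex.slitPlane_ne_zero (one_add_mul_mem_slitPlane him t)
  have htri : t * ‖c‖ - 1 ≤ ‖(1 + t * c : ℂ)‖ := by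
    simpa [add_comm, abs_of_nonneg ht] using norm_sub_norm_le (t * c) (-1)
  have hcos : Real.cos c.arg ≤ Real.cos (1 + t * c).arg := by
    rw [Complex.cos_arg hc, Complex.cos_arg hζ,
      div_le_div_iff₀ (norm_pos_iff.2 hc) (norm_pos_iff.2 hζ)]
    have hnorm : -c.re ≤ ‖c‖ := (neg_le_abs _).trans (Complex.abs_re_le_norm c)
    have : (1 + t * c : ℂ).re = 1 + t * c.re := by simp
    rw [this]
    nlinarith [mul_le_mul_of_nonpos_left htri hre.le]
  contrapose! hcos
  rw [← Real.cos_abs, ← Real.cos_abs c.arg]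
  exact Real.cos_lt_cos_of_nonneg_of_le_pi (abs_nonneg _) (Complex.abs_arg_le_pi _) hcos

lemma abs_arg_one_add_mul_mul_lt (hre : c.re < 0) (him : c.im ≠ 0) (hα : 0 ≤ α)
    (harg : |c.arg| * α < π / 2) {t : ℝ} (ht : 0 ≤ t) : |(1 + t * c).arg * α| < π / 2 := by
  rw [abs_mul, abs_of_nonneg hα]
  exact (mul_le_mul_of_nonneg_right (abs_arg_one_add_mul_le hre him ht) hα).trans_lt harg

lemma cos_mul_norm_rpow_le_re_cpow (hα : 0 ≤ α) {θ : ℝ} (hζ : |ζ.arg| ≤ θ) (hθ : θ * α ≤ π) :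
    Real.cos (θ * α) * ‖ζ‖ ^ α ≤ (ζ ^ (α : ℂ)).re := by
  rw [Complex.cpow_ofReal_re, mul_comm, ← Real.cos_abs (ζ.arg * α), abs_mul, abs_of_nonneg hα]
  gcongr
  exact Real.cos_le_cos_of_nonneg_of_le_pi (by positivity) hθ (by gcongr)

lemma wrightKernel_neg_ofReal (α : ℝ) (μ ζ : ℂ) (r : ℝ) :
    wrightKernel α μ (-r) ζ = hankelKernel μ ζ • Complex.exp (-(ζ ^ (α : ℂ) * r)) := by
  rw [wrightKernel, smul_eq_mul]
  ring_nf

lemma hasMellin_wrightKernel (hζ : ζ ≠ 0) (harg : |ζ.arg * α| < π / 2) (hw : 0 < w.re) (μ : ℂ) :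
    HasMellin (fun r : ℝ ↦ wrightKernel α μ (-r) ζ) w
      (Complex.Gamma w * hankelKernel (μ + α * w) ζ) := by
  have hre : 0 < (ζ ^ (α : ℂ)).re := by
    rw [Complex.cpow_ofReal_re]
    have := Real.cos_pos_of_mem_Ioo (abs_lt.1 harg)
    positivity
  have hpow : (ζ ^ (α : ℂ)) ^ (-w) = ζ ^ (-(α * w)) := by
    have him : (Complex.log ζ * α).im = ζ.arg * α := by simp [Complex.log_im]
    obtain ⟨hlow, hupp⟩ := abs_lt.1 harg
    rw [← mul_neg, Complex.cpow_mul _ (by linarith [pi_pos]) (by linarith [pi_pos])]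
  simp only [wrightKernel_neg_ofReal]
  obtain ⟨hconv, hval⟩ := hasMellin_exp_neg_mul hw hre
  convert hasMellin_const_smul hconv (hankelKernel μ ζ) using 1
  rw [hval, hpow, hankelKernel_add hζ, smul_eq_mul]
  ring

lemma integral_norm_mellin_wrightKernel_le {k : ℝ} (hζ : ζ ≠ 0) (hk : 0 < k)
    (hcone : k * ‖ζ‖ ^ α ≤ (ζ ^ (α : ℂ)).re) (hw : 0 < w.re) (μ : ℂ) :
    ∫ r in Ioi (0 : ℝ), ‖(r : ℂ) ^ (w - 1) • wrightKernel α μ (-r) ζ‖ ≤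
      Real.Gamma w.re * k ^ (-w.re) * ‖hankelKernel (μ + α * w.re) ζ‖ := by
  have hpos : 0 < k * ‖ζ‖ ^ α := by positivity
  have hre : 0 < (ζ ^ (α : ℂ)).re := hpos.trans_le hcone
  have hnorm : ‖ζ ^ (-(α * w.re : ℂ))‖ = (‖ζ‖ ^ α) ^ (-w.re) := by
    rw [← Real.rpow_mul (norm_nonneg ζ), ← Complex.norm_cpow_real]
    push_cast
    ring_nf
  calc ∫ r in Ioi (0 : ℝ), ‖(r : ℂ) ^ (w - 1) • wrightKernel α μ (-r) ζ‖
      = ‖hankelKernel μ ζ‖ * ∫ r in Ioi (0 : ℝ),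
          r ^ (w.re - 1) * Real.exp (-((ζ ^ (α : ℂ)).re * r)) := by
        rw [← integral_const_mul]
        refine setIntegral_congr_fun measurableSet_Ioi fun r hr ↦ ?_
        simp only [wrightKernel_neg_ofReal, norm_smul, Complex.norm_cpow_eq_rpow_re_of_pos hr,
          Complex.norm_exp, Complex.neg_re, Complex.re_mul_ofReal, Complex.sub_re, Complex.one_re]
        ring
    _ = ‖hankelKernel μ ζ‖ * ((ζ ^ (α : ℂ)).re ^ (-w.re) * Real.Gamma w.re) := by
        rw [Real.integral_rpow_mul_exp_neg_mul_Ioi hw hre, one_div, Real.inv_rpow hre.le,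
          Real.rpow_neg hre.le]
    _ ≤ ‖hankelKernel μ ζ‖ * ((k * ‖ζ‖ ^ α) ^ (-w.re) * Real.Gamma w.re) := by
        have := (Real.Gamma_pos_of_pos hw).le
        gcongr ?_ * (?_ * ?_)
        exact Real.rpow_le_rpow_of_nonpos hpos hcone (by linarith)
    _ = _ := by
        rw [hankelKernel_add hζ, norm_mul, hnorm, Real.mul_rpow hk.le (by positivity)]
        ring

lemma integrable_mellin_wrightKernel_ray (hre : c.re < 0) (him : c.im ≠ 0) (hα : 0 ≤ α)
    (harg : |c.arg| * α < π / 2) (hw : 0 < w.re) (μ : ℂ) :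
    Integrable (fun p : ℝ × ℝ ↦ (p.1 : ℂ) ^ (w - 1) • wrightKernel α μ (-p.1) (1 + p.2 * c))
      ((volume.restrict (Ioi 0)).prod (volume.restrict (Ioi 0))) := by
  have hmeas : Measurable fun p : ℝ × ℝ ↦
      (p.1 : ℂ) ^ (w - 1) • wrightKernel α μ (-p.1) (1 + p.2 * c) := by
    unfold wrightKernel
    fun_prop
  have hζ (t : ℝ) : (1 + t * c : ℂ) ≠ 0 :=
    Complex.slitPlane_ne_zero (one_add_mul_mem_slitPlane him t)
  have hk : 0 < Real.cos (|c.arg| * α) :=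
    Real.cos_pos_of_mem_Ioo ⟨by linarith [pi_pos, mul_nonneg (abs_nonneg c.arg) hα], harg⟩
  refine (integrable_prod_iff' hmeas.aestronglyMeasurable).2 ⟨?_, ?_⟩
  · filter_upwards [ae_restrict_mem measurableSet_Ioi] with t ht
    exact (hasMellin_wrightKernel (hζ t)
      (abs_arg_one_add_mul_mul_lt hre him hα harg (le_of_lt ht)) hw μ).1
  · refine ((integrableOn_hankelKernel hre him (μ + α * w.re)).norm.const_mul
      (Real.Gamma w.re * Real.cos (|c.arg| * α) ^ (-w.re))).mono'
      hmeas.norm.stronglyMeasurable.integral_prod_left'.aestronglyMeasurable ?_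
    filter_upwards [ae_restrict_mem measurableSet_Ioi] with t ht
    rw [Real.norm_of_nonneg (integral_nonneg fun _ ↦ norm_nonneg _)]
    exact integral_norm_mellin_wrightKernel_le (hζ t) hk (cos_mul_norm_rpow_le_re_cpow hα
      (abs_arg_one_add_mul_le hre him (le_of_lt ht)) (by linarith [pi_pos])) hw μ

lemma hasMellin_rayIntegral_wrightKernel (hre : c.re < 0) (him : c.im ≠ 0) (hα : 0 ≤ α)
    (harg : |c.arg| * α < π / 2) (hw : 0 < w.re) (μ : ℂ) :
    HasMellin (fun r : ℝ ↦ rayIntegral (wrightKernel α μ (-r)) 1 c) w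
      (Complex.Gamma w * rayIntegral (hankelKernel (μ + α * w)) 1 c) := by
  have hint := integrable_mellin_wrightKernel_ray hre him hα harg hw μ
  have hray (r : ℝ) : (r : ℂ) ^ (w - 1) • rayIntegral (wrightKernel α μ (-r)) 1 c =
      c * ∫ t in Ioi (0 : ℝ), (r : ℂ) ^ (w - 1) • wrightKernel α μ (-r) (1 + t * c) := by
    rw [integral_smul, rayIntegral, mul_smul_comm]
  have hinner (t : ℝ) (ht : t ∈ Ioi 0) : mellin (fun r ↦ wrightKernel α μ (-r) (1 + t * c)) w =
      Complex.Gamma w * hankelKernel (μ + α * w) (1 + t * c) :=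
    (hasMellin_wrightKernel (Complex.slitPlane_ne_zero (one_add_mul_mem_slitPlane him t))
      (abs_arg_one_add_mul_mul_lt hre him hα harg (le_of_lt ht)) hw μ).2
  refine ⟨?_, ?_⟩
  · simpa only [MellinConvergent, hray] using! hint.integral_prod_left.const_mul c
  · calc mellin (fun r : ℝ ↦ rayIntegral (wrightKernel α μ (-r)) 1 c) w
        = c * ∫ r in Ioi (0 : ℝ), ∫ t in Ioi (0 : ℝ),
            (r : ℂ) ^ (w - 1) • wrightKernel α μ (-r) (1 + t * c) := by
          simp only [mellin, hray, integral_const_mul]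
      _ = c * ∫ t in Ioi (0 : ℝ), mellin (fun r ↦ wrightKernel α μ (-r) (1 + t * c)) w := by
          rw [integral_integral_swap hint]
          rfl
      _ = _ := by
          rw [setIntegral_congr_fun measurableSet_Ioi hinner, integral_const_mul, rayIntegral]
          ring

end WrightMellin

section WrightFunction

variable {c w : ℂ} {α : ℝ}

lemma hasSum_hankelIntegral_wrightKernel (hre : c.re < 0) (him : 0 < c.im) (hα : α < 1)
    (μ z : ℂ) :
    HasSum (fun n : ℕ ↦ z ^ n / n.factorial * (Complex.Gamma (μ - α * n))⁻¹)
      (hankelIntegral (wrightKernel α μ z) c) := by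
  have h₁ := hasSum_rayIntegral_wrightKernel hre him.ne' hα μ z
  have h₂ := hasSum_rayIntegral_wrightKernel (c := conj c) (by simpa) (by simpa using him.ne')
    hα μ z
  refine ((h₁.sub h₂).mul_left (2 * π * Complex.I)⁻¹).congr_fun fun n ↦ ?_
  rw [← hankelIntegral_hankelKernel hre him, hankelIntegral]
  ring

lemma ofReal_wrightFn_neg (hre : c.re < 0) (him : 0 < c.im) (hα : α < 1) (μ z : ℝ) :
    (wrightFn (-α) μ z : ℂ) = hankelIntegral (wrightKernel α μ z) c := by
  rw [← (hasSum_hankelIntegral_wrightKernel hre him hα μ z).tsum_eq, wrightFn, Complex.ofReal_tsum]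
  refine tsum_congr fun n ↦ ?_
  have hΓ : Complex.Gamma (μ - α * n) = (Real.Gamma (-α * n + μ) : ℂ) := by
    rw [← Complex.Gamma_ofReal]
    push_cast
    ring_nf
  rw [hΓ]
  push_cast
  rw [div_mul_eq_div_div, div_eq_mul_inv (_ / _)]

lemma hasMellin_hankelIntegral_wrightKernel (hre : c.re < 0) (him : 0 < c.im) (hα : 0 ≤ α)
    (harg : |c.arg| * α < π / 2) (hw : 0 < w.re) (μ : ℂ) :
    HasMellin (fun r : ℝ ↦ hankelIntegral (wrightKernel α μ (-r)) c) w
      (Complex.Gamma w / Complex.Gamma (μ + α * w)) := by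
  have harg' : |(conj c).arg| = |c.arg| := by
    rw [Complex.arg_conj, if_neg (by simp [Complex.arg_eq_pi_iff, him.ne']), abs_neg]
  obtain ⟨hconv₁, hval₁⟩ := hasMellin_rayIntegral_wrightKernel hre him.ne' hα harg hw μ
  obtain ⟨hconv₂, hval₂⟩ := hasMellin_rayIntegral_wrightKernel (c := conj c) (by simpa)
    (by simpa using him.ne') hα (by rwa [harg']) hw μ
  obtain ⟨hconv, hval⟩ := hasMellin_sub hconv₁ hconv₂
  convert hasMellin_const_smul hconv (2 * π * Complex.I)⁻¹ using 1
  · rfl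
  · rw [hval, hval₁, hval₂, div_eq_mul_inv, ← hankelIntegral_hankelKernel hre him, hankelIntegral,
      smul_eq_mul]
    ring

lemma exists_direction_abs_arg_mul_lt (hα : α ∈ Ico 0 1) :
    ∃ c : ℂ, c.re < 0 ∧ 0 < c.im ∧ |c.arg| * α < π / 2 := by
  obtain ⟨hα0, hα1⟩ := hα
  -- For this angle, `φ * α = 2π - 3φ`, which is less than `π / 2` exactly when `π / 2 < φ`.
  set φ : ℝ := 2 * π / (3 + α)
  have hφ : φ * (3 + α) = 2 * π := div_mul_cancel₀ _ (by positivity)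
  have hφ_lt : φ < π := by
    rw [div_lt_iff₀ (by positivity)]
    nlinarith [pi_pos]
  have hlt_φ : π / 2 < φ := by
    rw [lt_div_iff₀ (by positivity)]
    nlinarith [pi_pos]
  refine ⟨Complex.exp (φ * Complex.I), ?_, ?_, ?_⟩
  · rw [Complex.exp_ofReal_mul_I_re]
    exact Real.cos_neg_of_pi_div_two_lt_of_lt hlt_φ (by linarith [pi_pos])
  · rw [Complex.exp_ofReal_mul_I_im]
    exact Real.sin_pos_of_pos_of_lt_pi (by linarith [pi_pos]) hφ_lt
  · rw [Complex.arg_exp_mul_I, (toIocMod_eq_self _).2 ⟨by linarith [pi_pos], by linarith⟩,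
      abs_of_pos (by linarith [pi_pos])]
    linarith

theorem hasMellin_wrightFn_neg (hα : α ∈ Ico 0 1) (hw : 0 < w.re) (μ : ℝ) :
    HasMellin (fun r : ℝ ↦ (wrightFn (-α) μ (-r) : ℂ)) w
      (Complex.Gamma w / Complex.Gamma (μ + α * w)) := by
  obtain ⟨c, hre, him, harg⟩ := exists_direction_abs_arg_mul_lt hα
  simpa only [ofReal_wrightFn_neg hre him hα.2, Complex.ofReal_neg]
    using hasMellin_hankelIntegral_wrightKernel hre him hα.1 harg hw μ

end WrightFunction

theorem stmt7_general {α ν : ℝ} (μ : ℝ) (hα : α ∈ Ico 0 1) (hν : -1 < ν) :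
    ∫ r in Ioi (0 : ℝ), wrightFn (-α) μ (-r) * r ^ ν =
      Real.Gamma (ν + 1) / Real.Gamma (μ + α * (ν + 1)) := by
  have hw : 0 < ((ν + 1 : ℝ) : ℂ).re := by simpa using neg_lt_iff_pos_add.1 hν
  have hcast : ((∫ r in Ioi (0 : ℝ), wrightFn (-α) μ (-r) * r ^ ν : ℝ) : ℂ) =
      mellin (fun r : ℝ ↦ (wrightFn (-α) μ (-r) : ℂ)) (ν + 1 : ℝ) := by
    rw [← integral_complex_ofReal, mellin]
    refine setIntegral_congr_fun measurableSet_Ioi fun r hr ↦ ?_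
    simp [Complex.ofReal_cpow (le_of_lt hr), mul_comm]
  rw [(hasMellin_wrightFn_neg hα hw μ).2, ← Complex.ofReal_mul, ← Complex.ofReal_add,
    Complex.Gamma_ofReal, Complex.Gamma_ofReal] at hcast
  exact_mod_cast hcast

theorem stmt7 (α ν : ℝ) (hα : α ∈ Set.Ioo (0 : ℝ) 1) (hν : -1 < ν) :
    ∫ r in Set.Ioi (0 : ℝ), wrightFn (-α) (1 - α) (-r) * r ^ ν =
      Real.Gamma (ν + 1) / Real.Gamma (ν * α + 1) := by
  rw [stmt7_general (1 - α) (Ioo_subset_Ico_self hα) hν]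
  ring_nf
end

section
/- Let α ∈ (0,1). There exist C_α > 0 and t* > 0 such that W_{-α,1}(-t^{1-α}) ≥ C_α t^{-1/2} e^{-γ_α t} for all t > t*; moreover, there exist C'_α > 0 and t** > 0 such that W_{-α,1}(-2 t^{1-α}) ≥ C'_α t^{-1/2} e^{-γ_α 2^{1/(1-α)} t} for all t > t**. -/
open Real Filter Topology

/-- `γ_α = (1-α) α^{α/(1-α)}`. -/
noncomputable def gammaAlpha (α : ℝ) : ℝ := (1 - α) * α ^ (α / (1 - α))

/-!
In the variable `w = log z` the integrand `exp (z - x z^α) dz / z` of the Hankel representation of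
`W_{-α,1}(-x)` is entire; let `H` be a primitive that is real on the real line. Along `im w = π`,
the upper side of the branch cut, `im H` passes from the limit `π` at `re w → -∞` to the limit
`π W_{-α,1}(-x)` at `re w → ∞`: expanding `exp (-x z^α)` on the cut and applying the reflection
formula for `Γ` term by term recovers the series of `W`. Since the integrand decays for
`2π/3 ≤ im w ≤ π`, `im H` has the same limit along the steepest descent curve, which starts on the
real line and on which the exponent is real. For `x = t^{1-α}` this yields
`π W_{-α,1}(-t^{1-α}) = ∫_0^π exp (-t A(θ)) dθ` with Kanter's function `A`. As
`A(θ) ≤ γ_α (1 + K θ²)` near `0`, the part `θ < t^{-1/2}` of the integral already contributes a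
constant times `t^{-1/2} exp (-γ_α t)`; factors in the argument are absorbed by rescaling `t`.
-/

section Growth

open MeasureTheory Set

variable {α x c : ℝ}

theorem mul_rpow_le_mul_add {r : ℝ} (hα0 : 0 ≤ α) (hα1 : α < 1) (hx : 0 ≤ x) (hc : 0 < c)
    (hr : 0 ≤ r) : x * r ^ α ≤ c * r + c * (x / c) ^ (1 / (1 - α)) := by
  set k : ℝ := (x / c) ^ (1 / (1 - α)) with hk
  have hk0 : 0 ≤ k := by positivity
  have hkx : k ^ (1 - α) = x / c := by
    rw [hk, ← rpow_mul (by positivity), one_div_mul_cancel (by linarith), rpow_one]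
  have amgm : r ^ α * k ^ (1 - α) ≤ α * r + (1 - α) * k :=
    geom_mean_le_arith_mean2_weighted hα0 (by linarith) hr hk0 (by ring)
  calc x * r ^ α = c * (r ^ α * k ^ (1 - α)) := by rw [hkx]; field_simp
    _ ≤ c * (α * r + (1 - α) * k) := by gcongr
    _ ≤ c * (r + k) := by
      gcongr
      · exact mul_le_of_le_one_left hr hα1.le
      · exact mul_le_of_le_one_left hk0 (by linarith)
    _ = c * r + c * k := mul_add ..

theorem tendsto_exp_mul_rpow_sub_mul_atTop (hα0 : 0 ≤ α) (hα1 : α < 1) (hx : 0 ≤ x)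
    (hc : 0 < c) : Tendsto (fun r : ℝ => rexp (x * r ^ α - c * r)) atTop (𝓝 0) := by
  refine Real.tendsto_exp_atBot.comp ?_
  have hlin : Tendsto (fun r : ℝ => -(c / 2) * r + c / 2 * (x / (c / 2)) ^ (1 / (1 - α)))
      atTop atBot :=
    tendsto_atBot_add_const_right _ _ (tendsto_id.const_mul_atTop_of_neg (by linarith))
  refine tendsto_atBot_mono' _ ?_ hlin
  filter_upwards [eventually_ge_atTop 0] with r hr
  linarith [mul_rpow_le_mul_add hα0 hα1 hx (half_pos hc) hr]

theorem integrableOn_rpow_mul_exp_neg_mul_exp_mul_rpow {s : ℝ} (hs : 0 < s) (hα0 : 0 ≤ α)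
    (hα1 : α < 1) (hx : 0 ≤ x) :
    IntegrableOn (fun r => r ^ (s - 1) * (rexp (-r) * rexp (x * r ^ α))) (Ioi 0) := by
  set K : ℝ := 1 / 2 * (x / (1 / 2)) ^ (1 / (1 - α))
  have hdom : IntegrableOn (fun r => rexp K * (r ^ (s - 1) * rexp (-(1 / 2) * r ^ (1 : ℝ))))
      (Ioi 0) :=
    (integrableOn_rpow_mul_exp_neg_mul_rpow (by linarith) one_pos one_half_pos).const_mul _
  refine hdom.mono' (by fun_prop) ((ae_restrict_iff' measurableSet_Ioi).mpr (ae_of_all _ ?_))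
  intro r (hr : 0 < r)
  have hyoung : x * r ^ α ≤ 1 / 2 * r + K :=
    mul_rpow_le_mul_add hα0 hα1 hx one_half_pos hr.le
  calc ‖r ^ (s - 1) * (rexp (-r) * rexp (x * r ^ α))‖
      = r ^ (s - 1) * rexp (-r + x * r ^ α) := by
        rw [Real.norm_of_nonneg (by positivity), Real.exp_add]
    _ ≤ r ^ (s - 1) * rexp (K + -(1 / 2) * r) := by
        gcongr _ * rexp ?_
        linarith
    _ = rexp K * (r ^ (s - 1) * rexp (-(1 / 2) * r ^ (1 : ℝ))) := by
        rw [Real.exp_add, rpow_one, mul_left_comm]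

end Growth

theorem Gamma_one_sub_inv {s : ℝ} (hs : Gamma s ≠ 0) :
    (Gamma (1 - s))⁻¹ = Gamma s * sin (π * s) / π := by
  have hreflection := Gamma_mul_Gamma_one_sub s
  rcases eq_or_ne (sin (π * s)) 0 with hsin | hsin
  · rw [hsin, div_zero, mul_eq_zero_iff_left hs] at hreflection
    rw [hreflection, hsin, inv_zero, mul_zero, zero_div]
  · have hproduct : Gamma s * Gamma (1 - s) * sin (π * s) = π := by
      rw [hreflection, div_mul_cancel₀ _ hsin]
    refine inv_eq_of_mul_eq_one_right ?_
    rw [mul_div_assoc', div_eq_one_iff_eq pi_ne_zero]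
    linarith

section BranchCut

open MeasureTheory Set

/-- The boundary value `(-r + i0)^α = r^α e^{iπα}` of the principal power on the upper side of its
branch cut, at distance `r` from the origin. -/
noncomputable def upperCutPow (α r : ℝ) : ℂ := Complex.exp (α * (log r + π * Complex.I))

/-- The density on the negative axis obtained by collapsing the Hankel contour for
`W_{-α,1}(-x)` onto the two sides of the branch cut; see `wrightFn_neg_eq_one_add_integral`. -/
noncomputable def wrightCutDensity (α x r : ℝ) : ℝ :=
  rexp (-r) / r * (Complex.exp (-x * upperCutPow α r)).im

variable {α x r : ℝ}

theorem upperCutPow_pow (hr : 0 < r) (n : ℕ) :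
    upperCutPow α r ^ n =
      (r ^ (α * n) : ℝ) * Complex.exp ((π * (α * n) : ℝ) * Complex.I) := by
  rw [upperCutPow, ← Complex.exp_nat_mul, rpow_def_of_pos hr, Complex.ofReal_exp, ← Complex.exp_add]
  congr 1
  push_cast
  ring

theorem norm_upperCutPow (hr : 0 < r) : ‖upperCutPow α r‖ = r ^ α := by
  have h := upperCutPow_pow (α := α) hr 1
  rw [pow_one, Nat.cast_one, mul_one] at h
  rw [h, norm_mul, Complex.norm_exp_ofReal_mul_I, mul_one, Complex.norm_of_nonneg (by positivity)]

theorem im_neg_mul_upperCutPow_pow (hr : 0 < r) (n : ℕ) :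
    ((-x * upperCutPow α r) ^ n).im = (-x) ^ n * (r ^ (α * n) * sin (π * (α * n))) := by
  rw [mul_pow, upperCutPow_pow hr, ← Complex.ofReal_neg, ← Complex.ofReal_pow,
    Complex.im_ofReal_mul, Complex.im_ofReal_mul, Complex.exp_ofReal_mul_I_im]

/-- The `(n + 1)`-st term of the expansion of `wrightCutDensity` in powers of `x`. -/
noncomputable def wrightCutTerm (α x : ℝ) (n : ℕ) (r : ℝ) : ℝ :=
  rexp (-r) / r * ((-x * upperCutPow α r) ^ (n + 1) / (n + 1).factorial : ℂ).im

theorem measurable_wrightCutTerm (n : ℕ) : Measurable (wrightCutTerm α x n) := by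
  unfold wrightCutTerm upperCutPow
  fun_prop

theorem hasSum_wrightCutTerm (r : ℝ) :
    HasSum (fun n => wrightCutTerm α x n r) (wrightCutDensity α x r) := by
  have hexp : HasSum (fun n : ℕ => (-x * upperCutPow α r) ^ (n + 1) / ((n + 1).factorial : ℂ))
      (Complex.exp (-x * upperCutPow α r) - 1) := by
    rw [Complex.exp_eq_exp_ℂ]
    simpa using (hasSum_nat_add_iff' 1).mpr
      (NormedSpace.expSeries_div_hasSum_exp (-x * upperCutPow α r))
  simpa only [wrightCutTerm, wrightCutDensity, Complex.sub_im, Complex.one_im, sub_zero] using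
    (Complex.hasSum_im hexp).mul_left (rexp (-r) / r)

/-- The dominating sequence for `wrightCutTerm`. Bounding `1 / (n + 1)!` by `1 / n!` makes it an
exponential series with integrable sum. -/
noncomputable def wrightCutBound (α x : ℝ) (n : ℕ) (r : ℝ) : ℝ :=
  |x| * (r ^ (α - 1) * rexp (-r)) * ((|x| * r ^ α) ^ n / n.factorial)

theorem norm_wrightCutTerm_le (hr : 0 < r) (n : ℕ) :
    ‖wrightCutTerm α x n r‖ ≤ wrightCutBound α x n r := by
  have hfac : (n.factorial : ℝ) ≤ (n + 1).factorial := mod_cast Nat.factorial_le n.le_succ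
  calc ‖wrightCutTerm α x n r‖
      ≤ rexp (-r) / r * ((|x| * r ^ α) ^ (n + 1) / (n + 1).factorial) := by
        rw [wrightCutTerm, norm_mul, Real.norm_of_nonneg (by positivity)]
        gcongr
        refine (Complex.abs_im_le_norm _).trans_eq ?_
        rw [norm_div, norm_pow, norm_mul, norm_neg, Complex.norm_real, norm_upperCutPow hr,
          Complex.norm_natCast, Real.norm_eq_abs]
    _ ≤ rexp (-r) / r * ((|x| * r ^ α) ^ (n + 1) / n.factorial) := by gcongr
    _ = wrightCutBound α x n r := by
        rw [wrightCutBound, rpow_sub_one hr.ne', pow_succ]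
        ring

theorem hasSum_wrightCutBound (r : ℝ) :
    HasSum (fun n => wrightCutBound α x n r)
      (|x| * (r ^ (α - 1) * (rexp (-r) * rexp (|x| * r ^ α)))) := by
  have hexp := NormedSpace.expSeries_div_hasSum_exp (|x| * r ^ α)
  rw [← Real.exp_eq_exp_ℝ] at hexp
  simpa only [wrightCutBound, mul_assoc] using hexp.mul_left (|x| * (r ^ (α - 1) * rexp (-r)))

theorem integrableOn_tsum_wrightCutBound (hα0 : 0 < α) (hα1 : α < 1) :
    IntegrableOn (fun r => ∑' n, wrightCutBound α x n r) (Ioi 0) := by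
  simp only [(hasSum_wrightCutBound _).tsum_eq]
  exact (integrableOn_rpow_mul_exp_neg_mul_exp_mul_rpow hα0 hα0.le hα1 (abs_nonneg x)).const_mul _

theorem integrableOn_wrightCutDensity (hα0 : 0 < α) (hα1 : α < 1) :
    IntegrableOn (wrightCutDensity α x) (Ioi 0) := by
  have hmeas : Measurable (wrightCutDensity α x) := by
    unfold wrightCutDensity upperCutPow
    fun_prop
  refine (integrableOn_tsum_wrightCutBound (x := x) hα0 hα1).mono' hmeas.aestronglyMeasurable
    ((ae_restrict_iff' measurableSet_Ioi).mpr (ae_of_all _ fun r (hr : 0 < r) => ?_))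
  rw [← (hasSum_wrightCutTerm r).tsum_eq]
  exact tsum_of_norm_bounded (hasSum_wrightCutBound r).summable.hasSum (norm_wrightCutTerm_le hr)

theorem integral_wrightCutTerm (hα : 0 < α) (n : ℕ) :
    ∫ r in Ioi 0, wrightCutTerm α x n r =
      π * ((-x) ^ (n + 1) / ((n + 1).factorial * Gamma (-α * (n + 1 : ℕ) + 1))) := by
  set s : ℝ := α * (n + 1 : ℕ) with hs
  have hs0 : 0 < s := by positivity
  have hterm : ∀ r ∈ Ioi (0 : ℝ), wrightCutTerm α x n r =
      (-x) ^ (n + 1) / (n + 1).factorial * sin (π * s) * (rexp (-r) * r ^ (s - 1)) := by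
    intro r (hr : 0 < r)
    rw [wrightCutTerm, Complex.div_natCast_im, im_neg_mul_upperCutPow_pow hr, rpow_sub_one hr.ne']
    ring
  rw [setIntegral_congr_fun measurableSet_Ioi hterm, integral_const_mul, ← Gamma_eq_integral hs0,
    show -α * ((n + 1 : ℕ) : ℝ) + 1 = 1 - s by rw [hs]; ring, div_mul_eq_div_div,
    div_eq_mul_inv _ (Gamma _), Gamma_one_sub_inv (Gamma_pos_of_pos hs0).ne']
  field_simp

theorem wrightFn_neg_eq_one_add_integral (hα0 : 0 < α) (hα1 : α < 1) :
    wrightFn (-α) 1 (-x) = 1 + π⁻¹ * ∫ r in Ioi 0, wrightCutDensity α x r := by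
  have htail : HasSum (fun n => ∫ r in Ioi 0, wrightCutTerm α x n r)
      (∫ r in Ioi 0, wrightCutDensity α x r) :=
    hasSum_integral_of_dominated_convergence (wrightCutBound α x)
      (fun n => (measurable_wrightCutTerm n).aestronglyMeasurable)
      (fun n => (ae_restrict_iff' measurableSet_Ioi).mpr
        (ae_of_all _ fun _ hr => norm_wrightCutTerm_le hr n))
      (ae_of_all _ fun r => (hasSum_wrightCutBound r).summable)
      (integrableOn_tsum_wrightCutBound hα0 hα1)
      (ae_of_all _ hasSum_wrightCutTerm)
  have hseries := htail.mul_left π⁻¹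
  simp only [integral_wrightCutTerm hα0, inv_mul_cancel_left₀ pi_ne_zero] at hseries
  rw [wrightFn, ((hasSum_nat_add_iff (f := fun n : ℕ =>
    (-x) ^ n / (n.factorial * Gamma (-α * n + 1))) 1).mp hseries).tsum_eq]
  simp [add_comm]

end BranchCut

section Primitive

open MeasureTheory Set

/-- The integrand of the Hankel representation
`W_{-α,1}(-x) = (2πi)⁻¹ ∫ exp (z - x z^α) dz / z` in the variable `w = log z`, in which it is
entire. -/
noncomputable def hankelIntegrand (α x : ℝ) (w : ℂ) : ℂ :=
  Complex.exp (Complex.exp w - x * Complex.exp (α * w))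

variable {α x : ℝ}

theorem hankelIntegrand_ofReal (a : ℝ) :
    hankelIntegrand α x a = (rexp (rexp a - x * rexp (α * a)) : ℝ) := by
  simp [hankelIntegrand]

theorem hankelIntegrand_log_add_pi_mul_I {r : ℝ} (hr : 0 < r) :
    hankelIntegrand α x (log r + π * Complex.I) =
      (rexp (-r) : ℝ) * Complex.exp (-x * upperCutPow α r) := by
  have hexp : Complex.exp (log r + π * Complex.I) = (-r : ℝ) := by
    rw [Complex.exp_add, Complex.exp_pi_mul_I, ← Complex.ofReal_exp, Real.exp_log hr]
    simp
  rw [hankelIntegrand, hexp, sub_eq_add_neg, Complex.exp_add, Complex.ofReal_exp, neg_mul,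
    upperCutPow]

theorem norm_hankelIntegrand_sub_one_le {a : ℝ} {w : ℂ} (hα : 0 ≤ α) (hw : w.re ≤ a)
    (ha : rexp a + |x| * rexp (α * a) ≤ 1) :
    ‖hankelIntegrand α x w - 1‖ ≤ 2 * (rexp a + |x| * rexp (α * a)) := by
  have hexponent : ‖Complex.exp w - x * Complex.exp (α * w)‖ ≤ rexp a + |x| * rexp (α * a) := by
    refine (norm_sub_le _ _).trans ?_
    rw [norm_mul, Complex.norm_exp, Complex.norm_exp, Complex.norm_real, Real.norm_eq_abs,
      Complex.re_ofReal_mul]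
    gcongr
  exact (Complex.norm_exp_sub_one_le (hexponent.trans ha)).trans (by gcongr)

theorem norm_hankelIntegrand_le {w : ℂ} (hw : cos w.im ≤ -(1 / 2)) :
    ‖hankelIntegrand α x w‖ ≤ rexp (|x| * rexp w.re ^ α - 1 / 2 * rexp w.re) := by
  have hre : (Complex.exp w - x * Complex.exp (α * w)).re =
      rexp w.re * cos w.im - x * (rexp w.re ^ α * cos (α * w.im)) := by
    simp [Complex.exp_re, ← Real.exp_mul, mul_comm α w.re]
  have hcos : -(x * (rexp w.re ^ α * cos (α * w.im))) ≤ |x| * rexp w.re ^ α := by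
    refine (neg_le_abs _).trans ?_
    rw [abs_mul, abs_mul, abs_of_pos (rpow_pos_of_pos (exp_pos _) _)]
    gcongr
    exact mul_le_of_le_one_right (by positivity) (abs_cos_le_one _)
  rw [hankelIntegrand, Complex.norm_exp, hre, Real.exp_le_exp]
  linarith [mul_le_mul_of_nonneg_left hw (exp_pos w.re).le]

theorem exists_primitive_hankelIntegrand (α x : ℝ) :
    ∃ H : ℂ → ℂ, (∀ w, HasDerivAt H (hankelIntegrand α x w) w) ∧ ∀ a : ℝ, (H a).im = 0 := by
  have hentire : Differentiable ℂ (hankelIntegrand α x) := by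
    unfold hankelIntegrand
    fun_prop
  obtain ⟨H, hH⟩ := hentire.isExactOn_univ
  have him (a : ℝ) : HasDerivAt (fun a : ℝ => (H a).im) 0 a := by
    have h := Complex.imCLM.hasFDerivAt.comp_hasDerivAt a (hH a (mem_univ _)).comp_ofReal
    rwa [hankelIntegrand_ofReal, Complex.imCLM_apply, Complex.ofReal_im] at h
  have hconst (a : ℝ) : (H a).im = (H 0).im := by
    simpa using is_const_of_deriv_eq_zero (fun a => (him a).differentiableAt)
      (fun a => (him a).deriv) a 0
  exact ⟨fun w => H w - H 0, fun w => (hH w (mem_univ w)).sub_const _, fun a => by simp [hconst a]⟩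

variable {H : ℂ → ℂ} (hH : ∀ w, HasDerivAt H (hankelIntegrand α x w) w)

include hH

theorem tendsto_primitive_sub_ofReal_atBot (hα : 0 < α) (θ : ℝ) :
    Tendsto (fun a : ℝ => H (a + θ * Complex.I) - H a) atBot (𝓝 (θ * Complex.I)) := by
  have hsmall : Tendsto (fun a : ℝ => rexp a + |x| * rexp (α * a)) atBot (𝓝 0) := by
    simpa using Real.tendsto_exp_atBot.add
      ((Real.tendsto_exp_atBot.comp (tendsto_id.const_mul_atBot hα)).const_mul |x|)
  have hbound : ∀ᶠ a : ℝ in atBot, ‖H (a + θ * Complex.I) - H a - θ * Complex.I‖ ≤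
      2 * (rexp a + |x| * rexp (α * a)) * |θ| := by
    filter_upwards [hsmall.eventually (eventually_le_nhds one_pos)] with a ha
    have hmean := Convex.norm_image_sub_le_of_norm_hasDerivWithin_le
      (s := {w : ℂ | w.re ≤ a}) (f := fun w => H w - w) (x := (a : ℂ)) (y := a + θ * Complex.I)
      (fun w _ => ((hH w).sub (hasDerivAt_id w)).hasDerivWithinAt)
      (fun w hw => norm_hankelIntegrand_sub_one_le hα.le hw ha)
      (convex_halfSpace_re_le a) (by simp) (by simp)
    convert hmean using 1
    · congr 1
      ring
    · simp
  rw [tendsto_iff_norm_sub_tendsto_zero]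
  refine squeeze_zero' (Eventually.of_forall fun _ => norm_nonneg _) hbound ?_
  simpa using (hsmall.const_mul 2).mul_const |θ|

theorem norm_primitive_sub_le {a θ : ℝ} (hθ : θ ∈ Icc (2 * π / 3) π) :
    ‖H (a + θ * Complex.I) - H (a + π * Complex.I)‖ ≤
      rexp (|x| * rexp a ^ α - 1 / 2 * rexp a) * (π / 3) := by
  have hpath (b : ℝ) : HasDerivAt (fun b : ℝ => H (a + b * Complex.I))
      (hankelIntegrand α x (a + b * Complex.I) * Complex.I) b := by
    have hline : HasDerivAt (fun b : ℝ => (a : ℂ) + b * Complex.I) (1 * Complex.I) b :=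
      ((hasDerivAt_id b).ofReal_comp.mul_const Complex.I).const_add _
    rw [one_mul] at hline
    exact (hH _).comp b hline
  have hbound (b : ℝ) (hb : b ∈ Icc (2 * π / 3) π) :
      ‖hankelIntegrand α x (a + b * Complex.I) * Complex.I‖ ≤
        rexp (|x| * rexp a ^ α - 1 / 2 * rexp a) := by
    have hcos : cos b ≤ -(1 / 2) := by
      rw [← cos_pi_div_three, ← cos_pi_sub]
      exact cos_le_cos_of_nonneg_of_le_pi (by linarith [pi_pos]) hb.2 (by linarith [hb.1])
    simpa using norm_hankelIntegrand_le (α := α) (x := x) (w := a + b * Complex.I)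
      (by simpa using hcos)
  have hmean := (convex_Icc (2 * π / 3) π).norm_image_sub_le_of_norm_hasDerivWithin_le
    (fun b _ => (hpath b).hasDerivWithinAt) hbound (right_mem_Icc.mpr (by linarith [pi_pos])) hθ
  refine hmean.trans ?_
  gcongr
  rw [Real.norm_eq_abs, abs_le]
  constructor <;> linarith [hθ.1, hθ.2, pi_pos]

theorem hasDerivAt_im_primitive_log_add_pi_mul_I {r : ℝ} (hr : 0 < r) :
    HasDerivAt (fun r : ℝ => (H (log r + π * Complex.I)).im) (wrightCutDensity α x r) r := by
  have hpath : HasDerivAt (fun r : ℝ => (log r : ℂ) + π * Complex.I) (r⁻¹ : ℝ) r :=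
    (hasDerivAt_log hr.ne').ofReal_comp.add_const _
  refine (Complex.imCLM.hasFDerivAt.comp_hasDerivAt r ((hH _).comp r hpath)).congr_deriv ?_
  rw [hankelIntegrand_log_add_pi_mul_I hr, mul_comm, Complex.imCLM_apply, Complex.im_ofReal_mul,
    Complex.im_ofReal_mul, wrightCutDensity]
  ring

variable (hreal : ∀ a : ℝ, (H a).im = 0)

include hreal

theorem tendsto_im_primitive_add_pi_mul_I_atBot (hα : 0 < α) :
    Tendsto (fun a : ℝ => (H (a + π * Complex.I)).im) atBot (𝓝 π) := by
  simpa [hreal, Function.comp_def] using (Complex.continuous_im.tendsto _).comp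
    (tendsto_primitive_sub_ofReal_atBot hH hα π)

theorem tendsto_im_primitive_add_pi_mul_I_atTop (hα0 : 0 < α) (hα1 : α < 1) :
    Tendsto (fun a : ℝ => (H (a + π * Complex.I)).im) atTop (𝓝 (π * wrightFn (-α) 1 (-x))) := by
  have hint := integrableOn_wrightCutDensity (x := x) hα0 hα1
  have hftc {b : ℝ} (hb : 0 < b) :
      ∫ r in (0)..b, wrightCutDensity α x r = (H (log b + π * Complex.I)).im - π :=
    intervalIntegral.integral_eq_sub_of_hasDerivAt_of_tendsto hb
      (fun r hr => hasDerivAt_im_primitive_log_add_pi_mul_I hH hr.1)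
      ((intervalIntegrable_iff_integrableOn_Ioc_of_le hb.le).mpr
        (hint.mono_set Ioc_subset_Ioi_self))
      ((tendsto_im_primitive_add_pi_mul_I_atBot hH hreal hα0).comp tendsto_log_nhdsGT_zero)
      ((hasDerivAt_im_primitive_log_add_pi_mul_I hH hb).continuousAt.tendsto.mono_left
        nhdsWithin_le_nhds)
  have hlimit : π * wrightFn (-α) 1 (-x) = π + ∫ r in Ioi 0, wrightCutDensity α x r := by
    rw [wrightFn_neg_eq_one_add_integral hα0 hα1, mul_add, mul_one,
      mul_inv_cancel_left₀ pi_ne_zero]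
  rw [hlimit]
  refine ((intervalIntegral_tendsto_integral_Ioi 0 hint tendsto_exp_atTop).const_add π).congr
    fun a => ?_
  rw [hftc (exp_pos a), log_exp, add_sub_cancel]

theorem tendsto_im_primitive_of_tendsto_atTop {ι : Type*} {l : Filter ι} {a θ : ι → ℝ}
    (hα0 : 0 < α) (hα1 : α < 1) (ha : Tendsto a l atTop)
    (hθ : ∀ᶠ i in l, θ i ∈ Icc (2 * π / 3) π) :
    Tendsto (fun i => (H (a i + θ i * Complex.I)).im) l (𝓝 (π * wrightFn (-α) 1 (-x))) := by
  have hdecay : Tendsto (fun i => rexp (|x| * rexp (a i) ^ α - 1 / 2 * rexp (a i)) * (π / 3)) l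
      (𝓝 0) := by
    simpa using ((tendsto_exp_mul_rpow_sub_mul_atTop hα0.le hα1 (abs_nonneg x)
      one_half_pos).comp (tendsto_exp_atTop.comp ha)).mul_const (π / 3)
  have hdiff : Tendsto (fun i => (H (a i + θ i * Complex.I) - H (a i + π * Complex.I)).im) l
      (𝓝 0) := by
    refine squeeze_zero_norm' ?_ hdecay
    filter_upwards [hθ] with i hi
    exact (Complex.abs_im_le_norm _).trans (norm_primitive_sub_le hH hi)
  simpa using hdiff.add ((tendsto_im_primitive_add_pi_mul_I_atTop hH hreal hα0 hα1).comp ha)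

end Primitive

section SteepestDescent

open MeasureTheory Set

/-- Up to the scale `t`, the modulus at argument `θ` of the curve on which `z - t^{1-α} z^α` is
real; this curve is the path of steepest descent through the saddle point
`t α^{1/(1-α)}`. -/
noncomputable def steepestRadius (α θ : ℝ) : ℝ := (sin (α * θ) / sin θ) ^ (1 / (1 - α))

/-- The steepest descent curve in the variable `log z`, parametrized by `θ = arg z ∈ (0, π)`. -/
noncomputable def steepestPath (α t θ : ℝ) : ℂ :=
  log (t * steepestRadius α θ) + θ * Complex.I

/-- Kanter's function, the phase of the Hankel integrand along the steepest descent curve; it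
also parametrizes the positive `α`-stable law. -/
noncomputable def kanterFn (α θ : ℝ) : ℝ :=
  sin ((1 - α) * θ) / sin (α * θ) * steepestRadius α θ

variable {α t θ : ℝ}

theorem sin_mul_pos {c : ℝ} (hc0 : 0 < c) (hc1 : c ≤ 1) (hθ : θ ∈ Ioo 0 π) : 0 < sin (c * θ) :=
  sin_pos_of_pos_of_lt_pi (mul_pos hc0 hθ.1)
    ((mul_le_of_le_one_left hθ.1.le hc1).trans_lt hθ.2)

theorem steepestRadius_pos (hα0 : 0 < α) (hα1 : α < 1) (hθ : θ ∈ Ioo 0 π) :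
    0 < steepestRadius α θ :=
  rpow_pos_of_pos (div_pos (sin_mul_pos hα0 hα1.le hθ) (sin_pos_of_mem_Ioo hθ)) _

theorem kanterFn_pos (hα0 : 0 < α) (hα1 : α < 1) (hθ : θ ∈ Ioo 0 π) : 0 < kanterFn α θ :=
  mul_pos (div_pos (sin_mul_pos (by linarith) (by linarith) hθ) (sin_mul_pos hα0 hα1.le hθ))
    (steepestRadius_pos hα0 hα1 hθ)

theorem measurable_kanterFn : Measurable (kanterFn α) := by
  unfold kanterFn steepestRadius
  fun_prop

theorem rpow_mul_steepestRadius_rpow (hα0 : 0 < α) (hα1 : α < 1) (ht : 0 < t)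
    (hθ : θ ∈ Ioo 0 π) :
    t ^ (1 - α) * (t * steepestRadius α θ) ^ α =
      t * steepestRadius α θ * sin θ / sin (α * θ) := by
  have hsin := sin_pos_of_mem_Ioo hθ
  have hsinα := sin_mul_pos hα0 hα1.le hθ
  have hρ := steepestRadius_pos hα0 hα1 hθ
  have hρpow : steepestRadius α θ ^ (1 - α) = sin (α * θ) / sin θ := by
    rw [steepestRadius, ← rpow_mul (by positivity), one_div_mul_cancel (by linarith), rpow_one]
  have hρα : steepestRadius α θ ^ α = steepestRadius α θ * sin θ / sin (α * θ) := by
    have h := rpow_sub hρ 1 (1 - α)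
    rw [sub_sub_cancel, rpow_one, hρpow] at h
    rw [h]
    field_simp
  rw [mul_rpow ht.le hρ.le, ← mul_assoc, ← rpow_add ht, sub_add_cancel, rpow_one, hρα]
  ring

theorem hankelIntegrand_steepestPath (hα0 : 0 < α) (hα1 : α < 1) (ht : 0 < t)
    (hθ : θ ∈ Ioo 0 π) :
    hankelIntegrand α (t ^ (1 - α)) (steepestPath α t θ) = (rexp (-(t * kanterFn α θ)) : ℝ) := by
  have hsinα := sin_mul_pos hα0 hα1.le hθ
  set R := t * steepestRadius α θ with hR
  have hR0 : 0 < R := mul_pos ht (steepestRadius_pos hα0 hα1 hθ)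
  have hexp : Complex.exp (log R + θ * Complex.I) = R * (cos θ + sin θ * Complex.I) := by
    rw [Complex.exp_add_mul_I, ← Complex.ofReal_exp, exp_log hR0, Complex.ofReal_cos,
      Complex.ofReal_sin]
  have hexpα : Complex.exp (α * (log R + θ * Complex.I)) =
      (R ^ α : ℝ) * (cos (α * θ) + sin (α * θ) * Complex.I) := by
    rw [mul_add, ← mul_assoc, Complex.exp_add_mul_I, rpow_def_of_pos hR0]
    push_cast
    rw [mul_comm (α : ℂ) (log R : ℂ)]
  have hphase : Complex.exp (log R + θ * Complex.I) -
      (t ^ (1 - α) : ℝ) * Complex.exp (α * (log R + θ * Complex.I)) =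
        (-(t * kanterFn α θ) : ℝ) := by
    rw [hexp, hexpα, ← mul_assoc, ← Complex.ofReal_mul,
      rpow_mul_steepestRadius_rpow hα0 hα1 ht hθ, ← hR]
    have hkanter : t * kanterFn α θ =
        R * (sin θ * cos (α * θ) - cos θ * sin (α * θ)) / sin (α * θ) := by
      rw [← sin_sub, ← one_sub_mul, kanterFn, hR]
      ring
    have hsinα' : (sin (α * θ) : ℂ) ≠ 0 := mod_cast hsinα.ne'
    rw [hkanter]
    push_cast at hsinα' ⊢
    field_simp
    ring
  rw [hankelIntegrand, steepestPath, hphase, Complex.ofReal_exp]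

theorem differentiableAt_steepestRadius (hα0 : 0 < α) (hα1 : α < 1) (hθ : θ ∈ Ioo 0 π) :
    DifferentiableAt ℝ (steepestRadius α) θ := by
  have hsin := (sin_pos_of_mem_Ioo hθ).ne'
  have hratio := (div_pos (sin_mul_pos hα0 hα1.le hθ) (sin_pos_of_mem_Ioo hθ)).ne'
  unfold steepestRadius
  fun_prop (disch := assumption)

theorem tendsto_steepestRadius_nhdsGT_zero (hα0 : 0 < α) :
    Tendsto (steepestRadius α) (𝓝[>] 0) (𝓝 (α ^ (1 / (1 - α)))) := by
  have hsinc : Tendsto (fun θ => α * sinc (α * θ) / sinc θ) (𝓝[>] 0) (𝓝 α) := by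
    have hcont : ContinuousAt (fun θ => α * sinc (α * θ) / sinc θ) 0 := by
      refine ContinuousAt.div ?_ continuous_sinc.continuousAt (by simp)
      exact (continuous_const.mul (continuous_sinc.comp (continuous_const_mul α))).continuousAt
    simpa using hcont.tendsto.mono_left nhdsWithin_le_nhds
  have hratio : Tendsto (fun θ => sin (α * θ) / sin θ) (𝓝[>] 0) (𝓝 α) := by
    refine hsinc.congr' ?_
    filter_upwards [self_mem_nhdsWithin] with θ (hθ : 0 < θ)
    rw [sinc_of_ne_zero hθ.ne', sinc_of_ne_zero (mul_pos hα0 hθ).ne']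
    field_simp
  exact hratio.rpow_const (Or.inl hα0.ne')

theorem tendsto_steepestRadius_nhdsLT_pi (hα0 : 0 < α) (hα1 : α < 1) :
    Tendsto (steepestRadius α) (𝓝[<] π) atTop := by
  have hsinαπ : 0 < sin (α * π) :=
    sin_pos_of_pos_of_lt_pi (by positivity) (mul_lt_of_lt_one_left pi_pos hα1)
  have hnum : Tendsto (fun θ => sin (α * θ)) (𝓝[<] π) (𝓝 (sin (α * π))) :=
    (Continuous.tendsto (by fun_prop) π).mono_left nhdsWithin_le_nhds
  have hden : Tendsto sin (𝓝[<] π) (𝓝[>] 0) := by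
    refine tendsto_nhdsWithin_iff.mpr ⟨?_, ?_⟩
    · simpa using (continuous_sin.tendsto π).mono_left (nhdsWithin_le_nhds (s := Iio π))
    · filter_upwards [Ioo_mem_nhdsLT pi_pos] with θ hθ using sin_pos_of_mem_Ioo hθ
  exact (tendsto_rpow_atTop (one_div_pos.mpr (sub_pos.mpr hα1))).comp
    (hnum.pos_mul_atTop hsinαπ hden.inv_tendsto_nhdsGT_zero)

section AlongPath

variable {H : ℂ → ℂ} (hH : ∀ w, HasDerivAt H (hankelIntegrand α (t ^ (1 - α)) w) w)

include hH

theorem hasDerivAt_im_primitive_steepestPath (hα0 : 0 < α) (hα1 : α < 1) (ht : 0 < t)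
    (hθ : θ ∈ Ioo 0 π) :
    HasDerivAt (fun θ => (H (steepestPath α t θ)).im) (rexp (-(t * kanterFn α θ))) θ := by
  have hlog : DifferentiableAt ℝ (fun θ => log (t * steepestRadius α θ)) θ :=
    ((differentiableAt_steepestRadius hα0 hα1 hθ).const_mul t).log
      (mul_pos ht (steepestRadius_pos hα0 hα1 hθ)).ne'
  have hpath : HasDerivAt (steepestPath α t)
      ((deriv (fun θ => log (t * steepestRadius α θ)) θ : ℝ) + (1 : ℝ) * Complex.I) θ :=
    hlog.hasDerivAt.ofReal_comp.add ((hasDerivAt_id θ).ofReal_comp.mul_const _)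
  refine (Complex.imCLM.hasFDerivAt.comp_hasDerivAt θ ((hH _).comp θ hpath)).congr_deriv ?_
  rw [hankelIntegrand_steepestPath hα0 hα1 ht hθ, Complex.imCLM_apply, Complex.im_ofReal_mul]
  simp

variable (hreal : ∀ a : ℝ, (H a).im = 0)

include hreal

theorem tendsto_im_primitive_steepestPath_nhdsGT_zero (hα0 : 0 < α) (ht : 0 < t) :
    Tendsto (fun θ => (H (steepestPath α t θ)).im) (𝓝[>] 0) (𝓝 0) := by
  have hlog : Tendsto (fun θ => log (t * steepestRadius α θ)) (𝓝[>] 0)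
      (𝓝 (log (t * α ^ (1 / (1 - α))))) :=
    ((tendsto_steepestRadius_nhdsGT_zero hα0).const_mul t).log (by positivity)
  have hpath : Tendsto (steepestPath α t) (𝓝[>] 0)
      (𝓝 (log (t * α ^ (1 / (1 - α))) + (0 : ℝ) * Complex.I)) :=
    hlog.ofReal.add ((tendsto_id.mono_left nhdsWithin_le_nhds).ofReal.mul_const _)
  have hcont : Continuous fun w => (H w).im :=
    Complex.continuous_im.comp (continuous_iff_continuousAt.mpr fun w => (hH w).continuousAt)
  simpa [hreal, Function.comp_def] using (hcont.tendsto _).comp hpath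

theorem tendsto_im_primitive_steepestPath_nhdsLT_pi (hα0 : 0 < α) (hα1 : α < 1) (ht : 0 < t) :
    Tendsto (fun θ => (H (steepestPath α t θ)).im) (𝓝[<] π)
      (𝓝 (π * wrightFn (-α) 1 (-(t ^ (1 - α))))) := by
  refine tendsto_im_primitive_of_tendsto_atTop hH hreal hα0 hα1
    (tendsto_log_atTop.comp ((tendsto_steepestRadius_nhdsLT_pi hα0 hα1).const_mul_atTop ht)) ?_
  filter_upwards [Ioo_mem_nhdsLT (show 2 * π / 3 < π by linarith [pi_pos])] with θ hθ
    using Ioo_subset_Icc_self hθ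

end AlongPath

theorem intervalIntegrable_exp_neg_mul_kanterFn (hα0 : 0 < α) (hα1 : α < 1) (ht : 0 ≤ t) :
    IntervalIntegrable (fun θ => rexp (-(t * kanterFn α θ))) volume 0 π := by
  rw [intervalIntegrable_iff_integrableOn_Ioo_of_le pi_pos.le]
  have hmeas : Measurable fun θ => rexp (-(t * kanterFn α θ)) :=
    (measurable_kanterFn.const_mul t).neg.exp
  refine IntegrableOn.of_bound (C := 1) measure_Ioo_lt_top hmeas.aestronglyMeasurable
    ((ae_restrict_iff' measurableSet_Ioo).mpr (ae_of_all _ fun θ hθ => ?_))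
  rw [norm_of_nonneg (exp_pos _).le, exp_le_one_iff, neg_nonpos]
  exact mul_nonneg ht (kanterFn_pos hα0 hα1 hθ).le

theorem pi_mul_wrightFn_neg_rpow_eq_integral (hα0 : 0 < α) (hα1 : α < 1) (ht : 0 < t) :
    π * wrightFn (-α) 1 (-(t ^ (1 - α))) = ∫ θ in (0)..π, rexp (-(t * kanterFn α θ)) := by
  obtain ⟨H, hH, hreal⟩ := exists_primitive_hankelIntegrand α (t ^ (1 - α))
  rw [intervalIntegral.integral_eq_sub_of_hasDerivAt_of_tendsto pi_pos
    (fun _ => hasDerivAt_im_primitive_steepestPath hH hα0 hα1 ht)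
    (intervalIntegrable_exp_neg_mul_kanterFn hα0 hα1 ht.le)
    (tendsto_im_primitive_steepestPath_nhdsGT_zero hH hreal hα0 ht)
    (tendsto_im_primitive_steepestPath_nhdsLT_pi hH hreal hα0 hα1 ht), sub_zero]

end SteepestDescent

section LowerBound

open MeasureTheory Set

variable {α : ℝ}

theorem mul_exp_neg_sq_le_sin {y : ℝ} (hy0 : 0 ≤ y) (hy1 : y ≤ 1) :
    y * rexp (-y ^ 2) ≤ sin y := by
  have hsq : y ^ 2 ≤ 1 := pow_le_one₀ hy0 hy1
  have hexp : rexp (-y ^ 2) ≤ 1 - y ^ 2 / 6 :=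
    calc rexp (-y ^ 2) ≤ 1 / (1 + y ^ 2) := by
          rw [exp_neg, ← one_div]
          gcongr
          linarith [add_one_le_exp (y ^ 2)]
      _ ≤ 1 - y ^ 2 / 6 := by
          rw [div_le_iff₀ (by positivity)]
          nlinarith [sq_nonneg y]
  calc y * rexp (-y ^ 2) ≤ y * (1 - y ^ 2 / 6) := by gcongr
    _ = y - y ^ 3 / 6 := by ring
    _ ≤ sin y := sin_ge_sub_cube hy0

theorem sin_mul_div_sin_mul_le {a b θ : ℝ} (ha0 : 0 < a) (hb0 : 0 < b) (hb1 : b ≤ 1) (hθ0 : 0 < θ)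
    (hθ1 : θ ≤ 1) : sin (a * θ) / sin (b * θ) ≤ a / b * rexp (θ ^ 2) := by
  have hbθ : b * θ ≤ θ := mul_le_of_le_one_left hθ0.le hb1
  have hden : b * θ * rexp (-θ ^ 2) ≤ sin (b * θ) :=
    calc b * θ * rexp (-θ ^ 2) ≤ b * θ * rexp (-(b * θ) ^ 2) := by gcongr
      _ ≤ sin (b * θ) := mul_exp_neg_sq_le_sin (by positivity) (hbθ.trans hθ1)
  calc sin (a * θ) / sin (b * θ) ≤ a * θ / (b * θ * rexp (-θ ^ 2)) := by
        gcongr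
        exact sin_le (by positivity)
    _ = a / b * rexp (θ ^ 2) := by
        rw [exp_neg]
        field_simp

theorem gammaAlpha_eq (hα0 : 0 < α) (hα1 : α < 1) :
    gammaAlpha α = (1 - α) / α * α ^ (1 / (1 - α)) := by
  have hexponent : 1 / (1 - α) = α / (1 - α) + 1 := by
    field_simp [(sub_pos.mpr hα1).ne']
    ring
  rw [gammaAlpha, hexponent, rpow_add_one hα0.ne']
  field_simp

theorem gammaAlpha_pos (hα0 : 0 < α) (hα1 : α < 1) : 0 < gammaAlpha α :=
  mul_pos (sub_pos.mpr hα1) (rpow_pos_of_pos hα0 _)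

theorem kanterFn_le_gammaAlpha_mul_exp {θ : ℝ} (hα0 : 0 < α) (hα1 : α < 1) (hθ0 : 0 < θ)
    (hθ1 : θ ≤ 1) :
    kanterFn α θ ≤ gammaAlpha α * rexp ((1 + 1 / (1 - α)) * θ ^ 2) := by
  have hθ : θ ∈ Ioo 0 π := ⟨hθ0, by linarith [pi_gt_three]⟩
  have hα1' : 0 < 1 - α := sub_pos.mpr hα1
  have hratio : sin (α * θ) / sin θ ≤ α * rexp (θ ^ 2) := by
    simpa using sin_mul_div_sin_mul_le hα0 one_pos le_rfl hθ0 hθ1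
  have hradius : steepestRadius α θ ≤ (α * rexp (θ ^ 2)) ^ (1 / (1 - α)) := by
    have hratio0 := div_pos (sin_mul_pos hα0 hα1.le hθ) (sin_pos_of_mem_Ioo hθ)
    exact rpow_le_rpow hratio0.le hratio (by positivity)
  calc kanterFn α θ
      ≤ (1 - α) / α * rexp (θ ^ 2) * (α * rexp (θ ^ 2)) ^ (1 / (1 - α)) := by
        have hradius0 := steepestRadius_pos hα0 hα1 hθ
        exact mul_le_mul (sin_mul_div_sin_mul_le hα1' hα0 hα1.le hθ0 hθ1) hradius hradius0.le
          (by positivity)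
    _ = gammaAlpha α * rexp ((1 + 1 / (1 - α)) * θ ^ 2) := by
        rw [gammaAlpha_eq hα0 hα1, mul_rpow hα0.le (exp_pos _).le, ← exp_mul, one_add_mul,
          exp_add, mul_comm (1 / (1 - α)) (θ ^ 2)]
        ring

theorem exp_mul_le_one_add_mul {k s : ℝ} (hs0 : 0 ≤ s) (hs1 : s ≤ 1) :
    rexp (k * s) ≤ 1 + (rexp k - 1) * s := by
  have h := rpow_one_add_le_one_add_mul_self (s := rexp k - 1) (by linarith [exp_pos k]) hs0 hs1
  rwa [add_sub_cancel, ← exp_mul, mul_comm s] at h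

theorem exists_kanterFn_le_gammaAlpha_mul (hα0 : 0 < α) (hα1 : α < 1) :
    ∃ K, 0 ≤ K ∧
      ∀ θ ∈ Ioc (0 : ℝ) 1, kanterFn α θ ≤ gammaAlpha α * (1 + K * θ ^ 2) := by
  have hexponent : 0 ≤ 1 + 1 / (1 - α) := by
    have := sub_pos.mpr hα1
    positivity
  refine ⟨rexp (1 + 1 / (1 - α)) - 1, sub_nonneg.mpr (one_le_exp hexponent), fun θ ⟨hθ0, hθ1⟩ => ?_⟩
  refine (kanterFn_le_gammaAlpha_mul_exp hα0 hα1 hθ0 hθ1).trans ?_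
  have := gammaAlpha_pos hα0 hα1
  gcongr
  exact exp_mul_le_one_add_mul (by positivity) (pow_le_one₀ hθ0.le hθ1)

theorem mul_le_integral_exp_neg_mul_kanterFn {t δ M : ℝ} (hα0 : 0 < α) (hα1 : α < 1) (ht : 0 ≤ t)
    (hδ0 : 0 ≤ δ) (hδπ : δ ≤ π) (hM : ∀ θ ∈ Ioo 0 δ, t * kanterFn α θ ≤ M) :
    δ * rexp (-M) ≤ ∫ θ in (0)..π, rexp (-(t * kanterFn α θ)) := by
  have hint := intervalIntegrable_exp_neg_mul_kanterFn hα0 hα1 ht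
  calc δ * rexp (-M) = ∫ _ in (0)..δ, rexp (-M) := by simp
    _ ≤ ∫ θ in (0)..δ, rexp (-(t * kanterFn α θ)) := by
        refine intervalIntegral.integral_mono_on_of_le_Ioo hδ0 intervalIntegrable_const
          (hint.mono_set (uIcc_subset_uIcc_left (by simp [mem_uIcc, hδ0, hδπ]))) fun θ hθ => ?_
        gcongr
        exact hM θ hθ
    _ ≤ ∫ θ in (0)..π, rexp (-(t * kanterFn α θ)) :=
        intervalIntegral.integral_mono_interval le_rfl hδ0 hδπ
          (ae_of_all _ fun _ => (exp_pos _).le) hint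

theorem exists_le_wrightFn_neg_rpow (hα0 : 0 < α) (hα1 : α < 1) :
    ∃ C, 0 < C ∧ ∀ t : ℝ, 1 ≤ t →
      C * t ^ (-(1 : ℝ) / 2) * rexp (-gammaAlpha α * t) ≤ wrightFn (-α) 1 (-(t ^ (1 - α))) := by
  obtain ⟨K, hK, hkanter⟩ := exists_kanterFn_le_gammaAlpha_mul hα0 hα1
  refine ⟨rexp (-(gammaAlpha α * K)) / π, by positivity, fun t ht => ?_⟩
  have ht0 : 0 < t := one_pos.trans_le ht
  set δ := t ^ (-(1 : ℝ) / 2)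
  have hδ0 : 0 < δ := rpow_pos_of_pos ht0 _
  have hδ1 : δ ≤ 1 := rpow_le_one_of_one_le_of_nonpos ht (by norm_num)
  have hδsq : t * δ ^ 2 = 1 := by
    have hexponent : -(1 : ℝ) / 2 * (2 : ℕ) = -1 := by norm_num
    rw [← rpow_mul_natCast ht0.le, hexponent, rpow_neg_one, mul_inv_cancel₀ ht0.ne']
  have hphase : ∀ θ ∈ Ioo 0 δ, t * kanterFn α θ ≤ gammaAlpha α * (t + K) := fun θ ⟨hθ0, hθδ⟩ =>
    have hγ := gammaAlpha_pos hα0 hα1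
    calc t * kanterFn α θ ≤ t * (gammaAlpha α * (1 + K * θ ^ 2)) := by
          gcongr
          exact hkanter θ ⟨hθ0, hθδ.le.trans hδ1⟩
      _ ≤ t * (gammaAlpha α * (1 + K * δ ^ 2)) := by gcongr
      _ = gammaAlpha α * (t + K * (t * δ ^ 2)) := by ring
      _ = gammaAlpha α * (t + K) := by rw [hδsq, mul_one]
  have hlower := mul_le_integral_exp_neg_mul_kanterFn hα0 hα1 ht0.le hδ0.le
    (hδ1.trans (by linarith [pi_gt_three])) hphase
  rw [← pi_mul_wrightFn_neg_rpow_eq_integral hα0 hα1 ht0, mul_comm π] at hlower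
  calc rexp (-(gammaAlpha α * K)) / π * δ * rexp (-gammaAlpha α * t)
      = δ * rexp (-(gammaAlpha α * (t + K))) / π := by
        rw [mul_add, neg_add, exp_add, neg_mul]
        ring
    _ ≤ wrightFn (-α) 1 (-(t ^ (1 - α))) := (div_le_iff₀ pi_pos).mpr hlower

theorem exists_le_wrightFn_neg_mul_rpow {c : ℝ} (hα0 : 0 < α) (hα1 : α < 1) (hc : 0 < c) :
    ∃ C, 0 < C ∧ ∃ t₀, 0 < t₀ ∧ ∀ t : ℝ, t₀ < t →
      C * t ^ (-(1 : ℝ) / 2) * rexp (-gammaAlpha α * c ^ (1 / (1 - α)) * t) ≤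
        wrightFn (-α) 1 (-(c * t ^ (1 - α))) := by
  obtain ⟨C, hC, hbound⟩ := exists_le_wrightFn_neg_rpow hα0 hα1
  set s := c ^ (1 / (1 - α)) with hs
  have hs0 : 0 < s := rpow_pos_of_pos hc _
  have hspow : s ^ (1 - α) = c := by
    rw [hs, ← rpow_mul hc.le, one_div_mul_cancel (by linarith), rpow_one]
  refine ⟨C * s ^ (-(1 : ℝ) / 2), by positivity, s⁻¹, by positivity, fun t ht => ?_⟩
  have ht0 : 0 < t := (inv_pos.mpr hs0).trans ht
  have hst : 1 ≤ s * t := ((inv_lt_iff_one_lt_mul₀' hs0).mp ht).le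
  have h := hbound (s * t) hst
  rwa [mul_rpow hs0.le ht0.le, mul_rpow hs0.le ht0.le, hspow, ← mul_assoc, ← mul_assoc] at h

end LowerBound

theorem stmt11 (α : ℝ) (hα : α ∈ Set.Ioo (0 : ℝ) 1) :
    (∃ C : ℝ, 0 < C ∧ ∃ tstar : ℝ, 0 < tstar ∧ ∀ t : ℝ, tstar < t →
      wrightFn (-α) 1 (-(t ^ (1 - α))) ≥
        C * t ^ (-(1 : ℝ) / 2) * Real.exp (-(gammaAlpha α) * t)) ∧
    (∃ C' : ℝ, 0 < C' ∧ ∃ tstarstar : ℝ, 0 < tstarstar ∧ ∀ t : ℝ, tstarstar < t →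
      wrightFn (-α) 1 (-(2 * t ^ (1 - α))) ≥
        C' * t ^ (-(1 : ℝ) / 2) * Real.exp (-(gammaAlpha α) * 2 ^ (1 / (1 - α)) * t)) := by
  refine ⟨?_, exists_le_wrightFn_neg_mul_rpow hα.1 hα.2 two_pos⟩
  simpa using exists_le_wrightFn_neg_mul_rpow hα.1 hα.2 one_pos
end
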